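/- arXiv:math/0302037 — 2 statements merged into one kernel-verified Lean document; each statement's English description precedes it below -/
import Mathlib

section
/- For all w, w′ ∈ W_n, the relations w ↔_L w′ and w ⇝_L w′ are equivalent. -/
open scoped Classical

noncomputable section

/-! ## The hyperoctahedral group `W_n` as signed permutations of `I_n ⊆ ℤ` -/

abbrev P := Equiv.Perm ℤ

/-- `W_n` : permutations of `I_n = {±1, …, ±n}` commuting with `i ↦ -i`,
realized as permutations of `ℤ` fixing everything outside `I_n`. -/
def Wset (n : ℕ) : Set P :=
  {π | (∀ i : ℤ, π (-i) = - π i) ∧ ∀ i : ℤ, (n : ℤ) < |i| → π i = i}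

/-- the generator `t = (1, -1)` -/
def tgen : P := Equiv.swap 1 (-1)

/-- the generator `s_i = (i, i+1)(-i, -(i+1))` -/
def sgen (i : ℕ) : P :=
  Equiv.swap (i : ℤ) ((i : ℤ) + 1) * Equiv.swap (-(i : ℤ)) (-((i : ℤ) + 1))

/-- the generating set `S_n = {t, s_1, …, s_{n-1}}` -/
def Sset (n : ℕ) : Set P := insert tgen (sgen '' Set.Icc 1 (n - 1))

/-- the length function of `W_n` with respect to `S_n` -/
def len (n : ℕ) (w : P) : ℕ :=
  sInf {k | ∃ l : List P, (∀ g ∈ l, g ∈ Sset n) ∧ l.prod = w ∧ l.length = k}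

/-- number of occurrences of `tgen` in a list -/
def tcount (l : List P) : ℕ := (l.map (fun g => if g = tgen then 1 else 0)).sum

/-- `ℓ_t(w)` : the number of occurrences of `t` in a (any) reduced expression of `w` -/
def tlen (n : ℕ) (w : P) : ℕ :=
  sInf {k | ∃ l : List P, (∀ g ∈ l, g ∈ Sset n) ∧ l.prod = w ∧
    l.length = len n w ∧ tcount l = k}

/-- the Bruhat order on `W_n` : `x ≤ y` iff some reduced expression of `y`
has a subword whose product is `x`. -/
def bruhat (n : ℕ) (x y : P) : Prop :=
  ∃ l l' : List P, (∀ g ∈ l, g ∈ Sset n) ∧ l.prod = y ∧ l.length = len n y ∧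
    List.Sublist l' l ∧ l'.prod = x

/-! ## Generalized Robinson–Schensted correspondence -/

abbrev Tab := List (List ℕ)

/-- row insertion of `x` into one row; returns the new row and the bumped entry (if any) -/
def insRow (x : ℕ) : List ℕ → List ℕ × Option ℕ
  | [] => ([x], none)
  | y :: ys =>
    if x < y then (x :: ys, some y)
    else
      let p := insRow x ys
      (y :: p.1, p.2)

/-- Schensted insertion of `x` into a tableau; returns the new tableau
and the (row, column) coordinates of the newly created box. -/
def insTab (x : ℕ) : Tab → Tab × ℕ × ℕ
  | [] => ([[x]], 0, 0)
  | row :: rest =>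
    let p := insRow x row
    match p.2 with
    | none => (p.1 :: rest, 0, row.length)
    | some b =>
      let q := insTab b rest
      (p.1 :: q.1, q.2.1 + 1, q.2.2)

/-- place the label `lbl` at the end of row `pos.1` of the recording tableau -/
def place (lbl : ℕ) (pos : ℕ × ℕ) (T : Tab) : Tab :=
  if pos.1 < T.length then T.set pos.1 ((T.getD pos.1 []) ++ [lbl]) else T ++ [[lbl]]

/-- one step of the generalized RS algorithm: insert `|π(i)|` into `A⁺` or `A⁻`
according to the sign of `π(i)`, and record `i` in the corresponding `B`-tableau. -/
def RSstep (π : P) (st : (Tab × Tab) × (Tab × Tab)) (i : ℕ) : (Tab × Tab) × (Tab × Tab) :=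
  let v := (π (i : ℤ)).natAbs
  if 0 < π (i : ℤ) then
    let p := insTab v st.1.1
    ((p.1, st.1.2), (place i p.2 st.2.1, st.2.2))
  else
    let p := insTab v st.1.2
    ((st.1.1, p.1), (st.2.1, place i p.2 st.2.2))

def RSfull (n : ℕ) (π : P) : (Tab × Tab) × (Tab × Tab) :=
  (((List.range n).map (· + 1)).foldl (RSstep π)) ((([], []), ([], [])))

/-- the insertion bitableau `A_n(π) = (A⁺, A⁻)` -/
def Atab (n : ℕ) (π : P) : Tab × Tab := (RSfull n π).1

/-- the recording bitableau `B_n(π) = (B⁺, B⁻)` -/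
def Btab (n : ℕ) (π : P) : Tab × Tab := (RSfull n π).2

/-- `T` is a standard Young tableau -/
def IsStdTab (T : Tab) : Prop :=
  (∀ row ∈ T, row ≠ [] ∧ row.Chain' (· < ·)) ∧
  T.Chain' (fun r1 r2 => r2.length ≤ r1.length) ∧
  ∀ i j : ℕ, i + 1 < T.length → j < (T.getD (i + 1) []).length →
    (T.getD i []).getD j 0 < (T.getD (i + 1) []).getD j 0

/-- `(T₁, T₂)` is an `n`-standard bitableau: both standard, entry sets disjoint
with union `{1, …, n}` -/
def IsNStdBitab (n : ℕ) (p : Tab × Tab) : Prop :=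
  IsStdTab p.1 ∧ IsStdTab p.2 ∧ (p.1.flatten ++ p.2.flatten).Perm (List.range' 1 n)

/-- the shape of a bitableau -/
def shape2 (p : Tab × Tab) : List ℕ × List ℕ := (p.1.map List.length, p.2.map List.length)

/-! ## Knuth relations -/

/-- `t_i = (i, -i)` -/
def ttgen (i : ℕ) : P := Equiv.swap (i : ℤ) (-(i : ℤ))

/-- `S'_n = S_n ∪ {t_1, …, t_n}` -/
def Sprime (n : ℕ) : Set P := Sset n ∪ (ttgen '' Set.Icc 1 n)

/-- the extended left descent set `L'(w)` -/
def Ldesc (n : ℕ) (w : P) : Set P := {u ∈ Sprime n | len n (u * w) < len n w}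

/-- the elementary relation `x —s→ y` -/
def knuthStep (n : ℕ) (x y : P) : Prop :=
  ∃ i ∈ Set.Icc 1 (n - 1), y = sgen i * x ∧ len n x < len n y ∧
    ¬ (Ldesc n x ⊆ Ldesc n y)

/-- the relation `x ↔_L y` -/
def knuthRel (n : ℕ) : P → P → Prop :=
  Relation.ReflTransGen (fun a b => knuthStep n a b ∨ knuthStep n b a)

/-! ## Parabolic subgroups, coset representatives and the decomposition -/

/-- the parabolic subgroup `𝔖_n = ⟨s_1, …, s_{n-1}⟩` -/
def SymN (n : ℕ) : Subgroup P := Subgroup.closure (sgen '' Set.Icc 1 (n - 1))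

/-- the parabolic subgroup `𝔖_{l, n-l} = ⟨{s_1, …, s_{n-1}} \ {s_l}⟩` -/
def SymLR (n l : ℕ) : Subgroup P :=
  Subgroup.closure (sgen '' {i | 1 ≤ i ∧ i ≤ n - 1 ∧ i ≠ l})

/-- `Y_{l, n-l}` : minimal length representatives of left cosets of `𝔖_{l,n-l}` in `𝔖_n` -/
def Yset (n l : ℕ) : Set P :=
  {w | w ∈ SymN n ∧ ∀ u ∈ SymLR n l, len n w ≤ len n (w * u)}

/-- `X_n` : minimal length representatives of the left cosets `w 𝔖_n` in `W_n` -/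
def Xset (n : ℕ) : Set P :=
  {w | w ∈ Wset n ∧ ∀ u ∈ SymN n, len n w ≤ len n (w * u)}

/-- `X_n^{(l)}` -/
def Xl (n l : ℕ) : Set P := {w ∈ Xset n | tlen n w = l}

/-- `r_1 = t`, `r_{i+1} = s_i r_i` -/
def rgen : ℕ → P
  | 0 => 1
  | 1 => tgen
  | (i + 2) => sgen (i + 1) * rgen (i + 1)

/-- `a_l = r_1 r_2 ⋯ r_l` -/
def al (l : ℕ) : P := ((List.range l).map (fun k => rgen (k + 1))).prod

/-- the set `X_n^{(l)} ⬝ 𝔖_{l, n-l}` -/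
def XSset (n l : ℕ) : Set P := Set.image2 (· * ·) (Xl n l) (SymLR n l : Set P)

/-- `w = a ⬝ a_l ⬝ σ ⬝ b⁻¹` is the canonical decomposition of `w`
(with `a, b ∈ Y_{l,n-l}`, `σ ∈ 𝔖_{l,n-l}` and additivity of lengths) -/
def IsDecomp (n l : ℕ) (w a σ b : P) : Prop :=
  a ∈ Yset n l ∧ b ∈ Yset n l ∧ σ ∈ SymLR n l ∧ w = a * al l * σ * b⁻¹ ∧
    len n w = len n a + len n (al l) + len n σ + len n b

/-- the relation `w ⇝_L w'` -/
def squig (n : ℕ) (w w' : P) : Prop :=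
  ∃ l a σ b a' σ', tlen n w = l ∧ tlen n w' = l ∧
    IsDecomp n l w a σ b ∧ IsDecomp n l w' a' σ' b ∧ knuthRel n σ σ'

/-! ## The two-parameter Iwahori–Hecke algebra and Kazhdan–Lusztig data -/

/-- the ring `A = ℤ[V^{±1}, v^{±1}]`, as the group algebra of `Γ = ℤ × ℤ`
(a monomial `V^i v^j` corresponds to `(i,j) ∈ ℤ × ℤ`). -/
abbrev RR := AddMonoidAlgebra ℤ (ℤ × ℤ)

/-- the monomial with exponent `g` -/
def mono (g : ℤ × ℤ) : RR := AddMonoidAlgebra.single g 1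

/-- `Γ₋` for the lexicographic order with `V ≫ v`: `V^i v^j < 1` -/
def Gneg (g : ℤ × ℤ) : Prop := g.1 < 0 ∨ (g.1 = 0 ∧ g.2 < 0)

/-- an element of `ℤ[Γ₋]` : all monomials lie in `Γ₋` -/
def inNeg (f : RR) : Prop := ∀ g ∈ f.coeff.support, Gneg g

/-- the bar involution of `A`, `V ↦ V⁻¹`, `v ↦ v⁻¹` -/
def barR : RR → RR := fun f => AddMonoidAlgebra.ofCoeff (Finsupp.equivMapDomain (Equiv.neg (ℤ × ℤ)) f.coeff)

/-- the parameter `v_s` of a generator (`v_t = V`, `v_{s_i} = v`) -/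
def vgen (g : P) : RR := if g = tgen then mono (1, 0) else mono (0, 1)

/-- the inverse `v_s⁻¹` of the parameter of a generator -/
def vgenInv (g : P) : RR := if g = tgen then mono (-1, 0) else mono (0, -1)

/-- the free `A`-module with basis indexed by permutations; the Hecke algebra
`H_n` is carried by the elements supported on `W_n`. -/
abbrev HH := P →₀ RR

/-- the standard basis element `T_w` -/
def TT (w : P) : HH := Finsupp.single w 1

/-- All the data attached to the Iwahori–Hecke algebra `H_n` of `W_n` over
`A = ℤ[V^{±1}, v^{±1}]`: the multiplication, the bar involution, the
Kazhdan–Lusztig basis `C_w = Σ_y P*_{y,w} T_y` (for the order on `Γ` given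
by `Γ₊ = {V^i v^j : i > 0} ∪ {v^j : j > 0}`), and Lusztig's `M`-polynomials,
together with their defining properties. -/
structure KLData (n : ℕ) where
  mul : HH → HH → HH
  mul_add_left : ∀ a b c, mul (a + b) c = mul a c + mul b c
  mul_add_right : ∀ a b c, mul a (b + c) = mul a b + mul a c
  mul_smul_left : ∀ (r : RR) a b, mul (r • a) b = r • mul a b
  mul_smul_right : ∀ (r : RR) a b, mul a (r • b) = r • mul a b
  mul_assoc : ∀ a b c, mul (mul a b) c = mul a (mul b c)
  one_mul : ∀ a, mul (TT 1) a = a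
  mul_one : ∀ a, mul a (TT 1) = a
  /-- `T_w T_{w'} = T_{w w'}` when lengths add -/
  T_mul : ∀ w w', w ∈ Wset n → w' ∈ Wset n →
    len n (w * w') = len n w + len n w' → mul (TT w) (TT w') = TT (w * w')
  /-- the quadratic relations `T_s² = T_1 + (v_s - v_s⁻¹) T_s` -/
  T_sq : ∀ g ∈ Sset n, mul (TT g) (TT g) = TT 1 + (vgen g - vgenInv g) • TT g
  bar : HH → HH
  bar_add : ∀ a b, bar (a + b) = bar a + bar b
  bar_smul : ∀ (r : RR) a, bar (r • a) = barR r • bar a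
  bar_mul : ∀ a b, bar (mul a b) = mul (bar a) (bar b)
  /-- `bar T_s = T_s⁻¹ = T_s + (v_s⁻¹ - v_s) T_1` -/
  bar_gen : ∀ g ∈ Sset n, bar (TT g) = TT g + (vgenInv g - vgen g) • TT 1
  /-- the Kazhdan–Lusztig basis element `C_w`, whose coordinate at `T_y` is
  the polynomial `P*_{y,w}` -/
  C : P → HH
  /-- `P*_{w,w} = 1` -/
  C_self : ∀ w, C w w = 1
  /-- `P*_{y,w} = 0` unless `y ≤ w` -/
  C_supp : ∀ w y, C w y ≠ 0 → bruhat n y w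
  /-- `P*_{y,w} ∈ ℤ[Γ₋]` for `y < w` -/
  C_neg : ∀ w y, y ≠ w → inNeg (C w y)
  /-- `C_w` is bar-invariant -/
  C_bar : ∀ w, w ∈ Wset n → bar (C w) = C w
  /-- `M s w` is the finitely supported family `z ↦ M^s_{z,w}` -/
  M : P → P → (P →₀ RR)
  M_supp : ∀ s w z, (M s w) z ≠ 0 → bruhat n z w ∧ z ≠ w ∧ len n (s * z) < len n z
  /-- the symmetry condition `bar M^s_{y,w} = M^s_{y,w}` -/
  M_bar : ∀ s w z, barR ((M s w) z) = (M s w) z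
  /-- the condition `M^s_{y,w} + Σ_{y<z<w, sz<z} P*_{y,z} M^s_{z,w} - v_s P*_{y,w} ∈ ℤ[Γ₋]` -/
  M_cond : ∀ s ∈ Sset n, ∀ y w, len n (s * y) < len n y → len n w < len n (s * w) →
    bruhat n y w → y ≠ w →
    inNeg ((M s w) y + (M s w).sum (fun z m => if z = y then 0 else C z y * m)
      - vgen s * C w y)
  /-- `C_s C_w = C_{sw} + Σ_{z<w, sz<z} M^s_{z,w} C_z` when `sw > w` -/
  mulC_up : ∀ s ∈ Sset n, ∀ w ∈ Wset n, len n w < len n (s * w) →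
    mul (C s) (C w) = C (s * w) + (M s w).sum (fun z m => m • C z)
  /-- `C_s C_w = (v_s + v_s⁻¹) C_w` when `sw < w` -/
  mulC_down : ∀ s ∈ Sset n, ∀ w ∈ Wset n, len n (s * w) < len n w →
    mul (C s) (C w) = (vgen s + vgenInv s) • C w

/-- `P_{y,w} = v_y⁻¹ v_w P*_{y,w}` -/
def Ppoly (n : ℕ) (D : KLData n) (y w : P) : RR :=
  mono ((tlen n w : ℤ) - (tlen n y : ℤ),
        ((len n w : ℤ) - (tlen n w : ℤ)) - ((len n y : ℤ) - (tlen n y : ℤ))) * D.C w y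

/-- the `R`-polynomials : `bar T_w = Σ_y R_{y,w} T_y` -/
def Rpoly {n : ℕ} (D : KLData n) (y w : P) : RR := (D.bar (TT w)) y

/-- `y ≤_{L,s} w` : `C_y` occurs with non-zero coefficient in `C_s C_w`
(expressed in the `C`-basis), for some `s ∈ S_n`, `y ≠ w` -/
def leLelem {n : ℕ} (D : KLData n) (y w : P) : Prop :=
  ∃ s ∈ Sset n, len n w < len n (s * w) ∧ (y = s * w ∨ (D.M s w) y ≠ 0)

/-- the preorder `≤_L` -/
def leL {n : ℕ} (D : KLData n) : P → P → Prop := Relation.ReflTransGen (leLelem D)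

/-- the equivalence `∼_L`; its classes are the left cells -/
def simL {n : ℕ} (D : KLData n) (y w : P) : Prop := leL D y w ∧ leL D w y

/-- `f` is a polynomial in `q = v²` -/
def isPolyInQ (f : RR) : Prop := ∀ g ∈ f.coeff.support, g.1 = 0 ∧ 0 ≤ g.2 ∧ 2 ∣ g.2

end

namespace KS

/-! ### Basic facts about `W_n` and the generators -/

lemma sgen_apply {i : ℕ} (hi : 1 ≤ i) (x : ℤ) : sgen i x =
    if x = i then (i : ℤ) + 1 else if x = (i : ℤ) + 1 then (i : ℤ)
    else if x = -(i : ℤ) then -((i : ℤ) + 1) else if x = -((i : ℤ) + 1) then -(i : ℤ) else x := by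
  simp only [sgen, Equiv.Perm.mul_apply, Equiv.swap_apply_def]
  grind

lemma tgen_apply (x : ℤ) : tgen x = if x = 1 then -1 else if x = -1 then 1 else x := by
  simp only [tgen, Equiv.swap_apply_def]

lemma ttgen_apply (i : ℕ) (x : ℤ) :
    ttgen i x = if x = i then -(i : ℤ) else if x = -(i : ℤ) then (i : ℤ) else x := by
  simp only [ttgen, Equiv.swap_apply_def]

lemma ttgen_one : ttgen 1 = tgen := by simp [ttgen, tgen]

lemma tgen_sq : tgen * tgen = 1 := by simp [tgen]

lemma ttgen_sq (i : ℕ) : ttgen i * ttgen i = 1 := by simp [ttgen]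

lemma sgen_sq {i : ℕ} (hi : 1 ≤ i) : sgen i * sgen i = 1 := by
  ext x
  simp only [Equiv.Perm.mul_apply, Equiv.Perm.one_apply, sgen_apply hi]
  grind

lemma tgen_inv : tgen⁻¹ = tgen := inv_eq_of_mul_eq_one_left tgen_sq
lemma ttgen_inv (i : ℕ) : (ttgen i)⁻¹ = ttgen i := inv_eq_of_mul_eq_one_left (ttgen_sq i)
lemma sgen_inv {i : ℕ} (hi : 1 ≤ i) : (sgen i)⁻¹ = sgen i :=
  inv_eq_of_mul_eq_one_left (sgen_sq hi)

lemma one_mem_W (n : ℕ) : (1 : P) ∈ Wset n := by simp [Wset]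

lemma mul_mem_W {n : ℕ} {x y : P} (hx : x ∈ Wset n) (hy : y ∈ Wset n) : x * y ∈ Wset n := by
  refine ⟨fun i => ?_, fun i hi => ?_⟩
  · simp [hy.1, hx.1]
  · simp [hy.2 i hi, hx.2 i hi]

lemma inv_mem_W {n : ℕ} {x : P} (hx : x ∈ Wset n) : x⁻¹ ∈ Wset n := by
  refine ⟨fun i => ?_, fun i hi => ?_⟩
  · rw [Equiv.Perm.inv_eq_iff_eq, hx.1]; simp
  · rw [Equiv.Perm.inv_eq_iff_eq, hx.2 i hi]

lemma sgen_mem_W {n i : ℕ} (hi : 1 ≤ i) (hin : i ≤ n - 1) : sgen i ∈ Wset n := by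
  refine ⟨fun x => ?_, fun x hx => ?_⟩
  · simp only [sgen_apply hi]; grind
  · simp only [sgen_apply hi]; rw [lt_abs] at hx; grind

lemma ttgen_mem_W {n i : ℕ} (hin : i ≤ n) : ttgen i ∈ Wset n := by
  refine ⟨fun x => ?_, fun x hx => ?_⟩
  · simp only [ttgen_apply]; grind
  · simp only [ttgen_apply]; rw [lt_abs] at hx; grind

lemma tgen_mem_W {n : ℕ} (hn : 1 ≤ n) : tgen ∈ Wset n := by
  rw [← ttgen_one]; exact ttgen_mem_W hn

lemma Sset_mem_W {n : ℕ} (hn : 1 ≤ n) {g : P} (hg : g ∈ Sset n) : g ∈ Wset n := by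
  rcases hg with rfl | ⟨i, hi, rfl⟩
  · exact tgen_mem_W hn
  · exact sgen_mem_W hi.1 hi.2

lemma list_prod_mem_W {n : ℕ} (hn : 1 ≤ n) (l : List P) (h : ∀ g ∈ l, g ∈ Sset n) :
    l.prod ∈ Wset n := by
  induction l with
  | nil => simpa using one_mem_W n
  | cons a l ih =>
    rw [List.prod_cons]
    exact mul_mem_W (Sset_mem_W hn (h a (by simp))) (ih fun g hg => h g (by simp [hg]))

lemma W_zero {n : ℕ} {x : P} (hx : x ∈ Wset n) : x 0 = 0 := by
  have := hx.1 0; simp at this; omega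

lemma W_ne_zero {n : ℕ} {x : P} (hx : x ∈ Wset n) {i : ℤ} (hi : i ≠ 0) : x i ≠ 0 := by
  intro h; exact hi (x.injective (h.trans (W_zero hx).symm))

lemma W_abs_le {n : ℕ} {x : P} (hx : x ∈ Wset n) {i : ℤ} (hi : |i| ≤ n) : |x i| ≤ n := by
  by_contra h
  push Not at h
  have := x.injective (hx.2 _ h)
  rw [this] at h; omega

lemma W_le {n : ℕ} {x : P} (hx : x ∈ Wset n) {i : ℤ} (h1 : -n ≤ i) (h2 : i ≤ n) :
    -n ≤ x i ∧ x i ≤ n := abs_le.1 (W_abs_le hx (abs_le.2 ⟨h1, h2⟩))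

lemma W_ext {n : ℕ} {x y : P} (hx : x ∈ Wset n) (hy : y ∈ Wset n)
    (h : ∀ i : ℤ, 1 ≤ i → i ≤ n → x i = y i) : x = y := by
  ext i
  rcases lt_trichotomy i 0 with h0 | rfl | h0
  · by_cases hin : -i ≤ n
    · have := h (-i) (by omega) hin
      rw [hx.1, hy.1] at this; omega
    · rw [hx.2, hy.2] <;> rw [lt_abs] <;> omega
  · rw [W_zero hx, W_zero hy]
  · by_cases hin : i ≤ n
    · exact h i h0 hin
    · rw [hx.2, hy.2] <;> rw [lt_abs] <;> omega

/-! ### The inversion statistic -/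

/-- index set -/
noncomputable def II (n : ℕ) : Finset ℤ := (Finset.Icc (-n : ℤ) n).erase 0

lemma mem_II {n : ℕ} {x : ℤ} : x ∈ II n ↔ x ≠ 0 ∧ -n ≤ x ∧ x ≤ n := by
  simp [II]

lemma W_mem_II {n : ℕ} {w : P} (hw : w ∈ Wset n) {x : ℤ} (hx : x ∈ II n) : w x ∈ II n := by
  rw [mem_II] at *
  exact ⟨W_ne_zero hw hx.1, W_le hw hx.2.1 hx.2.2⟩

noncomputable def MM (n : ℕ) (w : P) : Finset (ℤ × ℤ) :=
  (II n ×ˢ II n).filter fun p => p.1 < p.2 ∧ w p.2 < w p.1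

noncomputable def NegS (n : ℕ) (w : P) : Finset ℤ := (Finset.Icc (1 : ℤ) n).filter fun p => w p < 0

lemma mem_MM {n : ℕ} {w : P} {p : ℤ × ℤ} :
    p ∈ MM n w ↔ p.1 ∈ II n ∧ p.2 ∈ II n ∧ p.1 < p.2 ∧ w p.2 < w p.1 := by
  simp [MM, and_assoc]

lemma mem_NegS {n : ℕ} {w : P} {p : ℤ} :
    p ∈ NegS n w ↔ 1 ≤ p ∧ p ≤ n ∧ w p < 0 := by
  simp [NegS, and_assoc]

lemma MM_card_mul {n : ℕ} (w s : P) (hs : s ∈ Wset n) :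
    (MM n (w * s)).card =
      ((II n ×ˢ II n).filter fun p => s⁻¹ p.1 < s⁻¹ p.2 ∧ w p.2 < w p.1).card := by
  refine Finset.card_nbij' (fun p => (s p.1, s p.2)) (fun p => (s⁻¹ p.1, s⁻¹ p.2)) ?_ ?_ ?_ ?_
  · intro p hp
    simp only [Finset.mem_coe, mem_MM, Finset.mem_filter, Finset.mem_product] at *
    refine ⟨⟨W_mem_II hs hp.1, W_mem_II hs hp.2.1⟩, ?_, hp.2.2.2⟩
    simpa using hp.2.2.1
  · intro p hp
    simp only [Finset.mem_coe, mem_MM, Finset.mem_filter, Finset.mem_product] at *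
    have hs' := inv_mem_W hs
    refine ⟨W_mem_II hs' hp.1.1, W_mem_II hs' hp.1.2, hp.2.1, ?_⟩
    simpa using hp.2.2
  · intro p _; simp
  · intro p _; simp

lemma MM_s {n : ℕ} {w : P} (hw : w ∈ Wset n) {i : ℕ} (hi : 1 ≤ i) (hin : i ≤ n - 1)
    (h : w (i + 1) < w i) : (MM n (w * sgen i)).card + 2 = (MM n w).card := by
  rw [MM_card_mul _ _ (sgen_mem_W hi hin), sgen_inv hi]
  have h1 := hw.1 i
  have h2 := hw.1 (i + 1)
  have : ((II n ×ˢ II n).filter fun p => sgen i p.1 < sgen i p.2 ∧ w p.2 < w p.1) =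
      ((MM n w).erase ((i : ℤ), (i : ℤ) + 1)).erase (-((i : ℤ) + 1), -(i : ℤ)) := by
    ext ⟨p, q⟩
    simp only [Finset.mem_filter, Finset.mem_product, Finset.mem_erase, mem_MM, ne_eq,
      Prod.mk.injEq, sgen_apply hi]
    grind
  rw [this, Finset.card_erase_of_mem, Finset.card_erase_of_mem]
  · have : 1 < (MM n w).card := by
      rw [Finset.one_lt_card]
      refine ⟨((i : ℤ), (i : ℤ) + 1), ?_, (-((i : ℤ) + 1), -(i : ℤ)), ?_, ?_⟩
      · simp only [mem_MM, mem_II]; omega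
      · simp only [mem_MM, mem_II]; omega
      · simp only [ne_eq, Prod.mk.injEq]; omega
    omega
  · simp only [mem_MM, mem_II]; omega
  · simp only [Finset.mem_erase, ne_eq, Prod.mk.injEq, mem_MM, mem_II]; omega

lemma MM_t {n : ℕ} (hn : 1 ≤ n) {w : P} (hw : w ∈ Wset n)
    (h : w 1 < 0) : (MM n (w * tgen)).card + 1 = (MM n w).card := by
  rw [MM_card_mul _ _ (tgen_mem_W hn), tgen_inv]
  have h1 := hw.1 1
  have : ((II n ×ˢ II n).filter fun p => tgen p.1 < tgen p.2 ∧ w p.2 < w p.1) =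
      ((MM n w).erase (-1, 1)) := by
    ext ⟨p, q⟩
    simp only [Finset.mem_filter, Finset.mem_product, Finset.mem_erase, mem_MM, ne_eq,
      Prod.mk.injEq, tgen_apply, mem_II]
    grind
  rw [this]
  apply Finset.card_erase_add_one
  simp only [mem_MM, mem_II]; omega

lemma NegS_s {n : ℕ} (w : P) {i : ℕ} (hi : 1 ≤ i) (hin : i ≤ n - 1) :
    (NegS n (w * sgen i)).card = (NegS n w).card := by
  have hss : ∀ x, sgen i (sgen i x) = x := fun x => by
    rw [← Equiv.Perm.mul_apply, sgen_sq hi]; rfl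
  refine Finset.card_nbij' (sgen i) (sgen i) ?_ ?_ ?_ ?_
  · intro p hp
    simp only [Finset.mem_coe, mem_NegS, Equiv.Perm.mul_apply] at *
    refine ⟨?_, ?_, hp.2.2⟩ <;> rw [sgen_apply hi] <;> grind
  · intro p hp
    simp only [Finset.mem_coe, mem_NegS, Equiv.Perm.mul_apply] at *
    refine ⟨?_, ?_, by rw [hss]; exact hp.2.2⟩ <;> rw [sgen_apply hi] <;> grind
  · intro p _; exact hss p
  · intro p _; exact hss p

lemma NegS_t {n : ℕ} (hn : 1 ≤ n) {w : P} (hw : w ∈ Wset n)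
    (h : w 1 < 0) : (NegS n (w * tgen)).card + 1 = (NegS n w).card := by
  have h1 := hw.1 1
  have : NegS n (w * tgen) = (NegS n w).erase 1 := by
    ext p
    simp only [Finset.mem_erase, mem_NegS, ne_eq, Equiv.Perm.mul_apply, tgen_apply]
    grind
  rw [this]
  apply Finset.card_erase_add_one
  simp only [mem_NegS]; omega

/-- twice the length -/
noncomputable def NN (n : ℕ) (w : P) : ℕ := (MM n w).card + (NegS n w).card

lemma NN_s_down {n : ℕ} {w : P} (hw : w ∈ Wset n) {i : ℕ} (hi : 1 ≤ i) (hin : i ≤ n - 1)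
    (h : w (i + 1) < w i) : NN n (w * sgen i) + 2 = NN n w := by
  have := MM_s hw hi hin h
  have := NegS_s (n := n) w hi hin
  unfold NN; omega

lemma NN_s_up {n : ℕ} {w : P} (hw : w ∈ Wset n) {i : ℕ} (hi : 1 ≤ i) (hin : i ≤ n - 1)
    (h : w i < w (i + 1)) : NN n (w * sgen i) = NN n w + 2 := by
  have := NN_s_down (mul_mem_W hw (sgen_mem_W hi hin)) hi hin
    (by simp only [Equiv.Perm.mul_apply, sgen_apply hi]; simpa using h)
  rw [mul_assoc, sgen_sq hi, mul_one] at this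
  omega

lemma NN_t_down {n : ℕ} (hn : 1 ≤ n) {w : P} (hw : w ∈ Wset n)
    (h : w 1 < 0) : NN n (w * tgen) + 2 = NN n w := by
  have := MM_t hn hw h
  have := NegS_t hn hw h
  unfold NN; omega

lemma NN_t_up {n : ℕ} (hn : 1 ≤ n) {w : P} (hw : w ∈ Wset n)
    (h : 0 < w 1) : NN n (w * tgen) = NN n w + 2 := by
  have h1 := hw.1 1
  have := NN_t_down hn (mul_mem_W hw (tgen_mem_W hn))
    (by simp only [Equiv.Perm.mul_apply, tgen_apply]; simp; omega)
  rw [mul_assoc, tgen_sq, mul_one] at this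
  omega

lemma NN_one (n : ℕ) : NN n 1 = 0 := by
  have h1 : MM n 1 = ∅ := by
    ext p; simp only [mem_MM, Equiv.Perm.one_apply]; simp; omega
  have h2 : NegS n 1 = ∅ := by
    ext p; simp only [mem_NegS, Equiv.Perm.one_apply]; simp; omega
  simp [NN, h1, h2]

lemma NN_mul_le {n : ℕ} (hn : 1 ≤ n) {w g : P} (hw : w ∈ Wset n) (hg : g ∈ Sset n) :
    NN n (w * g) ≤ NN n w + 2 := by
  rcases hg with rfl | ⟨i, hi, rfl⟩
  · rcases lt_trichotomy (w 1) 0 with h | h | h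
    · have := NN_t_down hn hw h; omega
    · exact absurd h (W_ne_zero hw (by norm_num))
    · exact (NN_t_up hn hw h).le
  · rcases lt_trichotomy (w i) (w (i + 1)) with h | h | h
    · exact (NN_s_up hw hi.1 hi.2 h).le
    · have := w.injective h; omega
    · have := NN_s_down hw hi.1 hi.2 h; omega

lemma NN_list_le {n : ℕ} (hn : 1 ≤ n) (l : List P) (h : ∀ g ∈ l, g ∈ Sset n) :
    NN n l.prod ≤ 2 * l.length := by
  induction l using List.reverseRecOn with
  | nil => simp [NN_one]
  | append_singleton l a ih =>
    have hl : ∀ g ∈ l, g ∈ Sset n := fun g hg => h g (by simp [hg])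
    have := ih hl
    have := NN_mul_le hn (list_prod_mem_W hn l hl) (h a (by simp))
    rw [List.prod_append, List.prod_singleton, List.length_append, List.length_singleton]
    omega

/-- monotone elements are trivial -/
lemma eq_one_of_mono {n : ℕ} {w : P} (hw : w ∈ Wset n) (h1 : 0 < w 1)
    (h : ∀ i : ℕ, 1 ≤ i → i ≤ n - 1 → w i < w (i + 1)) : w = 1 := by
  have lower : ∀ i : ℕ, 1 ≤ i → i ≤ n → (i : ℤ) ≤ w i := by
    intro i hi
    induction i, hi using Nat.le_induction with
    | base => intro _; push_cast; omega
    | succ k hk ih =>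
      intro hkn
      have := ih (by omega)
      have := h k hk (by omega)
      push_cast; omega
  have upper : ∀ d i : ℕ, i + d = n → 1 ≤ i → w i ≤ i := by
    intro d
    induction d with
    | zero =>
      intro i hi h1
      have := (W_le hw (i := (i : ℤ)) (by omega) (by omega)).2
      omega
    | succ d ih =>
      intro i hi h1
      have := ih (i + 1) (by omega) (by omega)
      have := h i h1 (by omega)
      push_cast at *; omega
  refine W_ext hw (one_mem_W n) fun i hi hin => ?_
  obtain ⟨k, rfl⟩ := Int.eq_ofNat_of_zero_le (by omega : 0 ≤ i)
  have := lower k (by omega) (by omega)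
  have := upper (n - k) k (by omega) (by omega)
  simp only [Equiv.Perm.one_apply]
  omega

lemma exists_word {n : ℕ} (hn : 1 ≤ n) : ∀ (N : ℕ) (w : P), w ∈ Wset n → NN n w ≤ N →
    ∃ l : List P, (∀ g ∈ l, g ∈ Sset n) ∧ l.prod = w ∧ 2 * l.length = NN n w := by
  intro N
  induction N using Nat.strong_induction_on with
  | _ N ih =>
  intro w hw hN
  have key : ∀ g ∈ Sset n, g * g = 1 → NN n (w * g) + 2 = NN n w →
      ∃ l : List P, (∀ g ∈ l, g ∈ Sset n) ∧ l.prod = w ∧ 2 * l.length = NN n w := by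
    intro g hg hgg h
    obtain ⟨l, hl, hp, hlen⟩ := ih (NN n (w * g)) (by omega) (w * g)
      (mul_mem_W hw (Sset_mem_W hn hg)) le_rfl
    refine ⟨l ++ [g], ?_, ?_, ?_⟩
    · intro x hx
      simp only [List.mem_append, List.mem_singleton] at hx
      rcases hx with hx | rfl
      · exact hl x hx
      · exact hg
    · rw [List.prod_append, hp, List.prod_singleton, mul_assoc, hgg, mul_one]
    · simp; omega
  by_cases h1 : w 1 < 0
  · exact key tgen (by simp [Sset]) tgen_sq (NN_t_down hn hw h1)
  by_cases h2 : ∃ i : ℕ, 1 ≤ i ∧ i ≤ n - 1 ∧ w (i + 1) < w i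
  · obtain ⟨i, hi, hin, h⟩ := h2
    exact key (sgen i) (Or.inr ⟨i, ⟨hi, hin⟩, rfl⟩) (sgen_sq hi) (NN_s_down hw hi hin h)
  · have : w = 1 := by
      refine eq_one_of_mono hw ?_ ?_
      · have := W_ne_zero hw (i := 1) (by norm_num); omega
      · intro i hi hin
        push Not at h2
        rcases (h2 i hi hin).lt_or_eq with h | h
        · exact h
        · have := w.injective h; omega
    subst this
    exact ⟨[], by simp, by simp, by simp [NN_one]⟩

lemma len_NN {n : ℕ} (hn : 1 ≤ n) {w : P} (hw : w ∈ Wset n) : 2 * len n w = NN n w := by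
  obtain ⟨l, hl, hp, hlen⟩ := exists_word hn _ w hw le_rfl
  have hle : len n w ≤ l.length := Nat.sInf_le ⟨l, hl, hp, rfl⟩
  have hmem : len n w ∈ {k | ∃ l : List P, (∀ g ∈ l, g ∈ Sset n) ∧ l.prod = w ∧ l.length = k} :=
    Nat.sInf_mem ⟨_, l, hl, hp, rfl⟩
  obtain ⟨l', hl', hp', hlen'⟩ := hmem
  have := NN_list_le hn l' hl'
  rw [hp'] at this
  omega

lemma len_one {n : ℕ} (hn : 1 ≤ n) : len n 1 = 0 := by
  have := len_NN hn (one_mem_W n); rw [NN_one] at this; omega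

lemma len_s_down {n : ℕ} (hn : 1 ≤ n) {w : P} (hw : w ∈ Wset n) {i : ℕ} (hi : 1 ≤ i)
    (hin : i ≤ n - 1) (h : w (i + 1) < w i) : len n (w * sgen i) + 1 = len n w := by
  have := NN_s_down hw hi hin h
  rw [← len_NN hn hw, ← len_NN hn (mul_mem_W hw (sgen_mem_W hi hin))] at this
  omega

lemma len_s_up {n : ℕ} (hn : 1 ≤ n) {w : P} (hw : w ∈ Wset n) {i : ℕ} (hi : 1 ≤ i)
    (hin : i ≤ n - 1) (h : w i < w (i + 1)) : len n (w * sgen i) = len n w + 1 := by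
  have := NN_s_up hw hi hin h
  rw [← len_NN hn hw, ← len_NN hn (mul_mem_W hw (sgen_mem_W hi hin))] at this
  omega

lemma len_t_down {n : ℕ} (hn : 1 ≤ n) {w : P} (hw : w ∈ Wset n)
    (h : w 1 < 0) : len n (w * tgen) + 1 = len n w := by
  have := NN_t_down hn hw h
  rw [← len_NN hn hw, ← len_NN hn (mul_mem_W hw (tgen_mem_W hn))] at this
  omega

lemma len_t_up {n : ℕ} (hn : 1 ≤ n) {w : P} (hw : w ∈ Wset n)
    (h : 0 < w 1) : len n (w * tgen) = len n w + 1 := by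
  have := NN_t_up hn hw h
  rw [← len_NN hn hw, ← len_NN hn (mul_mem_W hw (tgen_mem_W hn))] at this
  omega

lemma W_i_ne (w : P) (i : ℤ) : w i < w (i + 1) ∨ w (i + 1) < w i := by
  rcases lt_trichotomy (w i) (w (i + 1)) with h | h | h
  · exact Or.inl h
  · have := w.injective h; omega
  · exact Or.inr h

lemma len_s_lt_iff {n : ℕ} (hn : 1 ≤ n) {w : P} (hw : w ∈ Wset n) {i : ℕ} (hi : 1 ≤ i)
    (hin : i ≤ n - 1) : len n (w * sgen i) < len n w ↔ w (i + 1) < w i := by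
  rcases W_i_ne w i with h | h
  · have := len_s_up hn hw hi hin h; omega
  · have := len_s_down hn hw hi hin h; omega

lemma ttgen_succ {i : ℕ} (hi : 1 ≤ i) : ttgen (i + 1) = sgen i * ttgen i * sgen i := by
  ext x
  simp only [Equiv.Perm.mul_apply, sgen_apply hi, ttgen_apply]
  push_cast
  grind

lemma len_tt_down {n : ℕ} (hn : 1 ≤ n) {i : ℕ} (hi : 1 ≤ i) : ∀ {w : P} (_ : w ∈ Wset n)
    (_ : i ≤ n) (_ : w i < 0), len n (w * ttgen i) < len n w := by
  induction i, hi using Nat.le_induction with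
  | base =>
    intro w hw _ h
    rw [ttgen_one]
    have := len_t_down hn hw (by simpa using h); omega
  | succ i hi ih =>
    intro w hw hin h
    have hin' : i ≤ n - 1 := by omega
    have hs := sgen_mem_W hi hin'
    have hd := mul_mem_W hw hs
    have hdi : (w * sgen i) i = w (i + 1) := by simp [sgen_apply hi]
    have hdi1 : (w * sgen i) (i + 1) = w i := by simp [sgen_apply hi]
    push_cast at h
    have h1 := ih hd (by omega) (by rw [hdi]; exact h)
    have hdt := mul_mem_W hd (ttgen_mem_W (n := n) (i := i) (by omega))
    have heq : w * ttgen (i + 1) = w * sgen i * ttgen i * sgen i := by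
      rw [ttgen_succ hi]; simp only [mul_assoc]
    rw [heq]
    rcases W_i_ne w i with hlt | hlt
    · have h2 := len_s_up hn hw hi hin' hlt
      have h3 := len_s_down hn hdt hi hin' (by
        rw [Equiv.Perm.mul_apply, Equiv.Perm.mul_apply _ (ttgen i) (i : ℤ)]
        rw [show ttgen i ((i : ℤ) + 1) = (i : ℤ) + 1 by rw [ttgen_apply]; grind,
          show ttgen i (i : ℤ) = -(i : ℤ) by rw [ttgen_apply]; simp, hd.1, hdi, hdi1]
        omega)
      omega
    · have h2 := len_s_down hn hw hi hin' hlt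
      rcases W_i_ne (w * sgen i * ttgen i) i with h' | h'
      · have := len_s_up hn hdt hi hin' h'; omega
      · have := len_s_down hn hdt hi hin' h'; omega

lemma len_tt_lt_iff {n : ℕ} (hn : 1 ≤ n) {i : ℕ} (hi : 1 ≤ i) {w : P} (hw : w ∈ Wset n)
    (hin : i ≤ n) : len n (w * ttgen i) < len n w ↔ w i < 0 := by
  refine ⟨fun h => ?_, len_tt_down hn hi hw hin⟩
  by_contra h0
  have hne := W_ne_zero hw (i := i) (by omega)
  have := len_tt_down hn hi (mul_mem_W hw (ttgen_mem_W hin)) hin (by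
    rw [Equiv.Perm.mul_apply, show ttgen i (i : ℤ) = -(i : ℤ) by rw [ttgen_apply]; simp, hw.1]
    omega)
  rw [mul_assoc, ttgen_sq, mul_one] at this
  omega

lemma Sset_inv {n : ℕ} {g : P} (hg : g ∈ Sset n) : g⁻¹ = g := by
  rcases hg with rfl | ⟨i, hi, rfl⟩
  · exact tgen_inv
  · exact sgen_inv hi.1

lemma len_inv_le {n : ℕ} (hn : 1 ≤ n) {w : P} (hw : w ∈ Wset n) : len n w⁻¹ ≤ len n w := by
  obtain ⟨l, hl, hp, hlen⟩ := exists_word hn _ w hw le_rfl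
  have := len_NN hn hw
  have h2 : len n w⁻¹ ≤ l.reverse.length := by
    refine Nat.sInf_le ⟨l.reverse, by simpa using hl, ?_, rfl⟩
    rw [← hp, List.prod_inv_reverse]
    congr 2
    symm
    conv_rhs => rw [← List.map_id l]
    exact List.map_congr_left (fun g hg => Sset_inv (hl g hg))
  simp at h2
  omega

lemma len_inv {n : ℕ} (hn : 1 ≤ n) {w : P} (hw : w ∈ Wset n) : len n w⁻¹ = len n w := by
  refine le_antisymm (len_inv_le hn hw) ?_
  have := len_inv_le hn (inv_mem_W hw)
  rwa [inv_inv] at this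

/-! ### `ℓ_t` -/

lemma sgen_ne_tgen {i : ℕ} (hi : 1 ≤ i) : sgen i ≠ tgen := by
  intro h
  have := congrArg (fun w : P => w ((i : ℤ) + 1)) h
  simp only [sgen_apply hi, tgen_apply] at this
  grind

lemma tcount_reduced {n : ℕ} (hn : 1 ≤ n) (l : List P) (h : ∀ g ∈ l, g ∈ Sset n)
    (hl : 2 * l.length = NN n l.prod) : tcount l = (NegS n l.prod).card := by
  induction l using List.reverseRecOn with
  | nil =>
    have h2 : NegS n 1 = ∅ := by
      ext p; simp only [mem_NegS, Equiv.Perm.one_apply]; simp; omega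
    simp [tcount, h2]
  | append_singleton l a ih =>
    have hl' : ∀ g ∈ l, g ∈ Sset n := fun g hg => h g (by simp [hg])
    have hW := list_prod_mem_W hn l hl'
    have hle := NN_list_le hn l hl'
    have ha := h a (by simp)
    have h2 := NN_mul_le hn hW ha
    rw [List.prod_append, List.prod_singleton] at hl ⊢
    rw [List.length_append, List.length_singleton] at hl
    have h3 := ih hl' (by omega)
    have h4 : tcount (l ++ [a]) = tcount l + if a = tgen then 1 else 0 := by simp [tcount]
    rw [h4, h3]
    rcases ha with rfl | ⟨i, hi, rfl⟩
    · have hpos : 0 < l.prod 1 := by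
        have h0 := W_ne_zero hW (i := 1) (by norm_num)
        by_contra hc
        have := NN_t_down hn hW (by omega)
        omega
      have h1 := hW.1 1
      have := NegS_t hn (mul_mem_W hW (tgen_mem_W hn))
        (by simp only [Equiv.Perm.mul_apply, tgen_apply]; simp; omega)
      rw [mul_assoc, tgen_sq, mul_one] at this
      simp; omega
    · rw [if_neg (sgen_ne_tgen hi.1), NegS_s _ hi.1 hi.2]; simp

lemma tlen_eq {n : ℕ} (hn : 1 ≤ n) {w : P} (hw : w ∈ Wset n) :
    tlen n w = (NegS n w).card := by
  have hL := len_NN hn hw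
  have hne : {k | ∃ l : List P, (∀ g ∈ l, g ∈ Sset n) ∧ l.prod = w ∧
    l.length = len n w ∧ tcount l = k}.Nonempty := by
    obtain ⟨l, hl, hp, hlen⟩ := exists_word hn _ w hw le_rfl
    exact ⟨_, l, hl, hp, by omega, rfl⟩
  obtain ⟨l, hl, hp, hlen, ht⟩ := Nat.sInf_mem hne
  unfold tlen
  rw [← ht, tcount_reduced hn l hl (by rw [hp]; omega), hp]

/-! ### Additivity of lengths -/

lemma sgen_inversion {i : ℕ} (hi : 1 ≤ i) {p q : ℤ} (h : p < q) (h' : sgen i q ≤ sgen i p) :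
    (p = i ∧ q = i + 1) ∨ (p = -(i + 1) ∧ q = -i) := by
  simp only [sgen_apply hi] at h'
  grind

lemma tgen_inversion {p q : ℤ} (h : p < q) (h' : tgen q ≤ tgen p) :
    (p = -1 ∧ q = 1) ∨ (p = -1 ∧ q = 0) ∨ (p = 0 ∧ q = 1) := by
  simp only [tgen_apply] at h'
  grind

lemma len_add {n : ℕ} (hn : 1 ≤ n) {x : P} (hx : x ∈ Wset n) : ∀ (N : ℕ) (y : P),
    y ∈ Wset n → len n y = N → (∀ p q, p < q → y q < y p → x (y q) < x (y p)) →
    len n (x * y) = len n x + len n y := by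
  intro N
  induction N with
  | zero =>
    intro y hy hN _
    have : y = 1 := by
      obtain ⟨l, hl, hp, hlen⟩ := exists_word hn _ y hy le_rfl
      have := len_NN hn hy
      have : l = [] := List.length_eq_zero_iff.1 (by omega)
      rw [← hp, this]; rfl
    subst this
    simp [len_one hn]
  | succ N ih =>
    intro y hy hN h
    by_cases h1 : y 1 < 0
    · have hm1 := hy.1 1
      have hxm1 := hx.1 (y 1)
      have e1 := len_t_down hn hy h1
      have hx1 := h (-1) 1 (by norm_num) (by omega)
      rw [hm1, hxm1] at hx1
      have e2 := len_t_down hn (mul_mem_W hx hy) (by rw [Equiv.Perm.mul_apply]; omega)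
      have e3 := ih (y * tgen) (mul_mem_W hy (tgen_mem_W hn)) (by omega) (by
        intro p q hpq hlt
        simp only [Equiv.Perm.mul_apply] at hlt ⊢
        by_cases hc : tgen p < tgen q
        · exact h _ _ hc hlt
        · exfalso
          have h0 := W_zero hy
          rcases tgen_inversion hpq (by omega) with ⟨rfl, rfl⟩ | ⟨rfl, rfl⟩ | ⟨rfl, rfl⟩ <;>
            simp [tgen_apply] at hlt <;> omega)
      rw [← mul_assoc] at e3
      omega
    by_cases h2 : ∃ i : ℕ, 1 ≤ i ∧ i ≤ n - 1 ∧ y (i + 1) < y i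
    · obtain ⟨i, hi, hin, hd⟩ := h2
      have e1 := len_s_down hn hy hi hin hd
      have e2 := len_s_down hn (mul_mem_W hx hy) hi hin (h _ _ (by omega) hd)
      have e3 := ih (y * sgen i) (mul_mem_W hy (sgen_mem_W hi hin)) (by omega) (by
        intro p q hpq hlt
        simp only [Equiv.Perm.mul_apply] at hlt ⊢
        by_cases hc : sgen i p < sgen i q
        · exact h _ _ hc hlt
        · exfalso
          have m1 := hy.1 i
          have m2 := hy.1 (i + 1)
          rcases sgen_inversion hi hpq (by omega) with ⟨rfl, rfl⟩ | ⟨rfl, rfl⟩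
          · rw [show sgen i ((i : ℤ) + 1) = i by rw [sgen_apply hi]; simp,
              show sgen i (i : ℤ) = i + 1 by rw [sgen_apply hi]; simp] at hlt
            omega
          · rw [show sgen i (-((i : ℤ) + 1)) = -i by rw [sgen_apply hi]; grind,
              show sgen i (-(i : ℤ)) = -(i + 1) by rw [sgen_apply hi]; grind] at hlt
            omega)
      rw [← mul_assoc] at e3
      omega
    · exfalso
      have : y = 1 := by
        refine eq_one_of_mono hy ?_ ?_
        · have := W_ne_zero hy (i := 1) (by norm_num); omega
        · intro i hi hin
          push Not at h2
          have := h2 i hi hin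
          have := W_i_ne y i
          omega
      subst this
      rw [len_one hn] at hN
      omega

end KS

namespace KS

/-! ### Knuth relations on words -/

inductive KE : List ℤ → List ℤ → Prop
  | k1 (u v : List ℤ) (x y z : ℤ) (h1 : x < y) (h2 : y < z) :
      KE (u ++ y :: x :: z :: v) (u ++ y :: z :: x :: v)
  | k2 (u v : List ℤ) (x y z : ℤ) (h1 : x < y) (h2 : y < z) :
      KE (u ++ x :: z :: y :: v) (u ++ z :: x :: y :: v)

inductive SE : List ℤ → List ℤ → Prop
  | mk (u v : List ℤ) (x z : ℤ) (h1 : x < 0) (h2 : 0 < z) :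
      SE (u ++ x :: z :: v) (u ++ z :: x :: v)

def SK (a b : List ℤ) : Prop := KE a b ∨ SE a b

def Kn : List ℤ → List ℤ → Prop := Relation.ReflTransGen (fun a b => KE a b ∨ KE b a)

def LK : List ℤ → List ℤ → Prop := Relation.ReflTransGen (fun a b => SK a b ∨ SK b a)

lemma Kn.symm {a b : List ℤ} (h : Kn a b) : Kn b a :=
  by
    unfold Kn at *
    have : Std.Symm (fun a b => KE a b ∨ KE b a) := ⟨fun _ _ h => h.symm⟩
    exact Std.Symm.symm _ _ h

lemma LK.symm {a b : List ℤ} (h : LK a b) : LK b a :=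
  by
    unfold LK at *
    have : Std.Symm (fun a b => SK a b ∨ SK b a) := ⟨fun _ _ h => h.symm⟩
    exact Std.Symm.symm _ _ h

lemma Kn.of {a b : List ℤ} (h : KE a b) : Kn a b := Relation.ReflTransGen.single (Or.inl h)
lemma LK.of {a b : List ℤ} (h : SK a b) : LK a b := Relation.ReflTransGen.single (Or.inl h)
lemma Kn.trans {a b c : List ℤ} (h : Kn a b) (h' : Kn b c) : Kn a c :=
  Relation.ReflTransGen.trans h h'
lemma LK.trans {a b c : List ℤ} (h : LK a b) (h2 : LK b c) : LK a c :=
  Relation.ReflTransGen.trans h h2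

/-- lifting lemma: a map that sends Knuth steps to `R`-related elements -/
lemma Kn.lift {R : List ℤ → List ℤ → Prop} (hr : ∀ a, R a a) (hs : ∀ a b, R a b → R b a)
    (ht : ∀ a b c, R a b → R b c → R a c) (h : ∀ a b, KE a b → R a b) {a b : List ℤ}
    (hab : Kn a b) : R a b := by
  induction hab with
  | refl => exact hr _
  | tail _ h2 ih =>
    refine ht _ _ _ ih ?_
    rcases h2 with h2 | h2
    · exact h _ _ h2
    · exact hs _ _ (h _ _ h2)

lemma LK.lift {R : List ℤ → List ℤ → Prop} (hr : ∀ a, R a a) (hs : ∀ a b, R a b → R b a)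
    (ht : ∀ a b c, R a b → R b c → R a c) (h : ∀ a b, SK a b → R a b) {a b : List ℤ}
    (hab : LK a b) : R a b := by
  induction hab with
  | refl => exact hr _
  | tail _ h2 ih =>
    refine ht _ _ _ ih ?_
    rcases h2 with h2 | h2
    · exact h _ _ h2
    · exact hs _ _ (h _ _ h2)

lemma KE.perm {a b : List ℤ} (h : KE a b) : a.Perm b := by
  cases h with
  | k1 u v x y z => exact List.Perm.append_left _ (List.Perm.cons _ (List.Perm.swap _ _ _))
  | k2 u v x y z => exact List.Perm.append_left _ (List.Perm.swap _ _ _)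

lemma Kn.perm {a b : List ℤ} (h : Kn a b) : a.Perm b :=
  Kn.lift (R := List.Perm) List.Perm.refl (fun _ _ h => h.symm) (fun _ _ _ h h' => h.trans h')
    (fun _ _ h => h.perm) h

lemma KE.append_left {a b : List ℤ} (w : List ℤ) (h : KE a b) : KE (w ++ a) (w ++ b) := by
  cases h with
  | k1 u v x y z h1 h2 =>
    rw [← List.append_assoc, ← List.append_assoc]; exact KE.k1 _ _ _ _ _ h1 h2
  | k2 u v x y z h1 h2 =>
    rw [← List.append_assoc, ← List.append_assoc]; exact KE.k2 _ _ _ _ _ h1 h2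

lemma KE.append_right {a b : List ℤ} (w : List ℤ) (h : KE a b) : KE (a ++ w) (b ++ w) := by
  cases h with
  | k1 u v x y z h1 h2 =>
    simp only [List.append_assoc, List.cons_append]; exact KE.k1 _ _ _ _ _ h1 h2
  | k2 u v x y z h1 h2 =>
    simp only [List.append_assoc, List.cons_append]; exact KE.k2 _ _ _ _ _ h1 h2

lemma SE.append_left {a b : List ℤ} (w : List ℤ) (h : SE a b) : SE (w ++ a) (w ++ b) := by
  cases h with
  | mk u v x z h1 h2 =>
    rw [← List.append_assoc, ← List.append_assoc]; exact SE.mk _ _ _ _ h1 h2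

lemma Kn.append {a b a' b' : List ℤ} (h : Kn a b) (h' : Kn a' b') : Kn (a ++ a') (b ++ b') := by
  have h1 : Kn (a ++ a') (b ++ a') :=
    Kn.lift (R := fun a b => Kn (a ++ a') (b ++ a')) (fun _ => Relation.ReflTransGen.refl)
      (fun _ _ h => h.symm) (fun _ _ _ h h' => h.trans h')
      (fun _ _ h => Kn.of (KE.append_right a' h)) h
  have h2 : Kn (b ++ a') (b ++ b') :=
    Kn.lift (R := fun x y => Kn (b ++ x) (b ++ y)) (fun _ => Relation.ReflTransGen.refl)
      (fun _ _ h => h.symm) (fun _ _ _ h h' => h.trans h')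
      (fun _ _ h => Kn.of (KE.append_left b h)) h'
  exact h1.trans h2

lemma LK.append_left {a b : List ℤ} (w : List ℤ) (h : LK a b) : LK (w ++ a) (w ++ b) :=
  LK.lift (R := fun x y => LK (w ++ x) (w ++ y)) (fun _ => Relation.ReflTransGen.refl)
      (fun _ _ h => h.symm) (fun _ _ _ h h' => h.trans h')
      (fun _ _ h => LK.of (Or.imp (KE.append_left w) (SE.append_left w) h)) h

lemma Kn.toLK {a b : List ℤ} (h : Kn a b) : LK a b :=
  Kn.lift (R := LK) (fun _ => Relation.ReflTransGen.refl)
      (fun _ _ h => h.symm) (fun _ _ _ h h' => h.trans h') (fun _ _ h => LK.of (Or.inl h)) h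

lemma KE.map {a b : List ℤ} (h : KE a b) (f : ℤ → ℤ)
    (hf : ∀ x ∈ a, ∀ y ∈ a, x < y → f x < f y) : KE (a.map f) (b.map f) := by
  cases h with
  | k1 u v x y z h1 h2 =>
    simp only [List.map_append, List.map_cons]
    exact KE.k1 _ _ _ _ _ (hf _ (by simp) _ (by simp) h1) (hf _ (by simp) _ (by simp) h2)
  | k2 u v x y z h1 h2 =>
    simp only [List.map_append, List.map_cons]
    exact KE.k2 _ _ _ _ _ (hf _ (by simp) _ (by simp) h1) (hf _ (by simp) _ (by simp) h2)

lemma Kn.map {a b : List ℤ} (h : Kn a b) (f : ℤ → ℤ)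
    (hf : ∀ x ∈ a, ∀ y ∈ a, x < y → f x < f y) : Kn (a.map f) (b.map f) := by
  induction h with
  | refl => exact Relation.ReflTransGen.refl
  | @tail b c h1 h2 ih =>
    have pb : a.Perm b := Kn.perm h1
    refine Relation.ReflTransGen.tail ih ?_
    rcases h2 with h2 | h2
    · refine Or.inl (h2.map f ?_)
      intro x hx y hy
      exact hf x (pb.mem_iff.2 hx) y (pb.mem_iff.2 hy)
    · refine Or.inr (h2.map f ?_)
      intro x hx y hy
      exact hf x (pb.mem_iff.2 (h2.perm.mem_iff.1 hx)) y (pb.mem_iff.2 (h2.perm.mem_iff.1 hy))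

lemma KE.rev {a b : List ℤ} (h : KE a b) :
    KE (a.reverse.map (fun x => -x)) (b.reverse.map (fun x => -x)) := by
  cases h with
  | k1 u v x y z h1 h2 =>
    simp only [List.reverse_append, List.reverse_cons, List.map_append, List.append_assoc,
      List.map_cons, List.map_nil, List.cons_append, List.nil_append]
    exact KE.k2 _ _ _ _ _ (by omega) (by omega)
  | k2 u v x y z h1 h2 =>
    simp only [List.reverse_append, List.reverse_cons, List.map_append, List.append_assoc,
      List.map_cons, List.map_nil, List.cons_append, List.nil_append]
    exact KE.k1 _ _ _ _ _ (by omega) (by omega)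

lemma Kn.rev {a b : List ℤ} (h : Kn a b) :
    Kn (a.reverse.map (fun x => -x)) (b.reverse.map (fun x => -x)) :=
  Kn.lift (R := fun a b => Kn (a.reverse.map (fun x => -x)) (b.reverse.map (fun x => -x)))
      (fun _ => Relation.ReflTransGen.refl)
      (fun _ _ h => h.symm) (fun _ _ _ h h' => h.trans h') (fun _ _ h => Kn.of h.rev) h

lemma SK.filter {a b : List ℤ} (h : SK a b) (p : ℤ → Bool)
    (hp : ∀ x y z, x < y → y < z → p x → p z → p y)
    (hp0 : ∀ x z, x < 0 → 0 < z → p x → p z → False) : Kn (a.filter p) (b.filter p) := by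
  rcases h with h | h
  · cases h with
    | k1 u v x y z h1 h2 =>
      simp only [List.filter_append, List.filter_cons]
      have := hp x y z h1 h2
      by_cases hx : p x <;> by_cases hz : p z
      · simp only [hx, hz, this hx hz, if_true]
        exact Kn.of (KE.k1 _ _ _ _ _ h1 h2)
      all_goals simp only [hx, hz, if_true]; exact Relation.ReflTransGen.refl
    | k2 u v x y z h1 h2 =>
      simp only [List.filter_append, List.filter_cons]
      have := hp x y z h1 h2
      by_cases hx : p x <;> by_cases hz : p z
      · simp only [hx, hz, this hx hz, if_true]
        exact Kn.of (KE.k2 _ _ _ _ _ h1 h2)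
      all_goals simp only [hx, hz, if_true]; exact Relation.ReflTransGen.refl
  · cases h with
    | mk u v x z h1 h2 =>
      simp only [List.filter_append, List.filter_cons]
      have := hp0 x z h1 h2
      by_cases hx : p x <;> by_cases hz : p z
      · exact (this hx hz).elim
      all_goals simp only [hx, hz, if_true]; exact Relation.ReflTransGen.refl

lemma LK.filter {a b : List ℤ} (h : LK a b) (p : ℤ → Bool)
    (hp : ∀ x y z, x < y → y < z → p x → p z → p y)
    (hp0 : ∀ x z, x < 0 → 0 < z → p x → p z → False) : Kn (a.filter p) (b.filter p) :=
  LK.lift (R := fun a b => Kn (a.filter p) (b.filter p)) (fun _ => Relation.ReflTransGen.refl)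
    (fun _ _ h => h.symm) (fun _ _ _ h h' => h.trans h') (fun _ _ h => h.filter p hp hp0) h

def isN (x : ℤ) : Bool := decide (x < 0)
def isP (x : ℤ) : Bool := decide (0 < x)

lemma LK_move (x : ℤ) (hx : 0 < x) (a b : List ℤ) (ha : ∀ y ∈ a, y < 0) :
    LK (x :: (a ++ b)) (a ++ x :: b) := by
  induction a with
  | nil => exact Relation.ReflTransGen.refl
  | cons y a ih =>
    have h1 : LK (x :: y :: (a ++ b)) (y :: x :: (a ++ b)) :=
      (LK.of (Or.inr (SE.mk [] (a ++ b) y x (ha y (by simp)) hx))).symm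
    exact h1.trans (LK.append_left [y] (ih fun z hz => ha z (by simp [hz])))

lemma LK_sort (a : List ℤ) (h : ∀ x ∈ a, x ≠ 0) : LK a (a.filter isN ++ a.filter isP) := by
  induction a with
  | nil => exact Relation.ReflTransGen.refl
  | cons x a ih =>
    have h1 : LK (x :: a) (x :: (a.filter isN ++ a.filter isP)) :=
      LK.append_left [x] (ih fun z hz => h z (by simp [hz]))
    have hx := h x (by simp)
    rcases lt_or_gt_of_ne hx with h0 | h0
    · have e1 : isN x = true := by simp [isN, h0]
      have e2 : isP x = false := by simp [isP]; omega
      simpa [List.filter_cons, e1, e2] using h1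
    · have e1 : isN x = false := by simp [isN]; omega
      have e2 : isP x = true := by simp [isP, h0]
      have h2 := h1.trans (LK_move x h0 (a.filter isN) (a.filter isP) (by
        intro y hy
        simpa [isN] using (List.mem_filter.1 hy).2))
      simpa [List.filter_cons, e1, e2] using h2

lemma LK_iff {a b : List ℤ} (ha : ∀ x ∈ a, x ≠ 0) (hb : ∀ x ∈ b, x ≠ 0) :
    LK a b ↔ Kn (a.filter isN) (b.filter isN) ∧ Kn (a.filter isP) (b.filter isP) := by
  constructor
  · intro h
    constructor
    · apply h.filter <;> simp only [isN, decide_eq_true_eq] <;> intros <;> omega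
    · apply h.filter <;> simp only [isP, decide_eq_true_eq] <;> intros <;> omega
  · rintro ⟨h1, h2⟩
    exact (LK_sort a ha).trans ((h1.append h2).toLK.trans (LK_sort b hb).symm)

end KS

namespace KS

/-! ### Words of elements of `W_n` -/

def rng (a k : ℕ) : List ℤ := (List.range' a k).map (fun j : ℕ => (j : ℤ))

lemma rng_length (a k : ℕ) : (rng a k).length = k := by simp [rng]

lemma mem_rng {a k : ℕ} {x : ℤ} : x ∈ rng a k ↔ (a : ℤ) ≤ x ∧ x < a + k := by
  simp only [rng, List.mem_map, List.mem_range'_1]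
  constructor
  · rintro ⟨j, hj, rfl⟩; omega
  · intro h; exact ⟨x.toNat, by omega, by omega⟩

lemma rng_split (a j k : ℕ) : rng a (j + k) = rng a j ++ rng (a + j) k := by
  simp only [rng, ← List.map_append, List.range'_append_1]

lemma rng_succ (a k : ℕ) : rng a (k + 1) = (a : ℤ) :: rng (a + 1) k := by
  simp [rng, List.range'_succ]

lemma rng_zero (a : ℕ) : rng a 0 = [] := by simp [rng]

def word (n : ℕ) (c : P) : List ℤ := (rng 1 n).map c

lemma word_length (n : ℕ) (c : P) : (word n c).length = n := by simp [word, rng_length]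

lemma word_ne_zero {n : ℕ} {c : P} (hc : c ∈ Wset n) : ∀ x ∈ word n c, x ≠ 0 := by
  intro x hx
  simp only [word, List.mem_map, mem_rng] at hx
  obtain ⟨y, hy, rfl⟩ := hx
  exact W_ne_zero hc (by omega)

lemma word_inj {n : ℕ} {c d : P} (hc : c ∈ Wset n) (hd : d ∈ Wset n)
    (h : word n c = word n d) : c = d := by
  refine W_ext hc hd fun i h1 h2 => ?_
  exact List.map_inj_left.1 h i (mem_rng.2 (by omega))

lemma word_split {n : ℕ} (c : P) {j m : ℕ} (h : j + m ≤ n) :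
    word n c = (rng 1 j).map c ++ ((rng (j + 1) m).map c ++
      (rng (j + m + 1) (n - j - m)).map c) := by
  simp only [word, ← List.map_append]
  congr 1
  obtain ⟨k, rfl⟩ := Nat.exists_eq_add_of_le h
  rw [show j + m + k - j - m = k by omega, show j + m + k = j + (m + k) by omega,
    rng_split, rng_split, show 1 + j = j + 1 by omega, show j + 1 + m = j + m + 1 by omega]

lemma word_split_inv {n : ℕ} {c : P} {u m v : List ℤ} (h : word n c = u ++ (m ++ v)) :
    u.length + m.length ≤ n ∧ u = (rng 1 u.length).map c ∧
      m = (rng (u.length + 1) m.length).map c ∧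
      v = (rng (u.length + m.length + 1) (n - u.length - m.length)).map c := by
  have hl := congrArg List.length h
  rw [word_length] at hl
  simp only [List.length_append] at hl
  have hle : u.length + m.length ≤ n := by omega
  rw [word_split c hle] at h
  obtain ⟨h1, h2⟩ := List.append_inj h (by simp [rng_length])
  obtain ⟨h3, h4⟩ := List.append_inj h2 (by simp [rng_length])
  exact ⟨hle, h1.symm, h3.symm, h4.symm⟩

lemma map_sgen {a k i : ℕ} (hi : 1 ≤ i) (c : P) (h1 : 1 ≤ a) (h : a + k ≤ i ∨ i + 1 < a) :
    (rng a k).map (c * sgen i) = (rng a k).map c := by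
  apply List.map_congr_left
  intro x hx
  rw [mem_rng] at hx
  rw [Equiv.Perm.mul_apply, sgen_apply hi]
  congr 1
  grind

lemma mul_sgen_i {i : ℕ} (hi : 1 ≤ i) (c : P) : (c * sgen i) i = c (i + 1) := by
  simp [sgen_apply hi]
lemma mul_sgen_i1 {i : ℕ} (hi : 1 ≤ i) (c : P) : (c * sgen i) (i + 1) = c i := by
  simp [sgen_apply hi]

lemma word_two {n : ℕ} (c : P) {j : ℕ} (h : j + 2 ≤ n) :
    word n c = (rng 1 j).map c ++ c (j + 1) :: c (j + 2) :: (rng (j + 3) (n - j - 2)).map c := by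
  rw [word_split c h, rng_succ, rng_succ, rng_zero]
  push_cast
  simp [add_assoc]

lemma word_three {n : ℕ} (c : P) {j : ℕ} (h : j + 3 ≤ n) :
    word n c = (rng 1 j).map c ++
      c (j + 1) :: c (j + 2) :: c (j + 3) :: (rng (j + 4) (n - j - 3)).map c := by
  rw [word_split c h, rng_succ, rng_succ, rng_succ, rng_zero]
  push_cast
  simp [add_assoc]

lemma word_swap {n : ℕ} (c : P) {j : ℕ} (h : j + 2 ≤ n) :
    word n (c * sgen (j + 1)) =
      (rng 1 j).map c ++ c (j + 2) :: c (j + 1) :: (rng (j + 3) (n - j - 2)).map c := by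
  rw [word_two _ h, map_sgen (by omega) _ (by omega) (by omega),
    map_sgen (by omega) _ (by omega) (by omega)]
  have h1 := mul_sgen_i (i := j + 1) (by omega) c
  have h2 := mul_sgen_i1 (i := j + 1) (by omega) c
  simp only [Nat.cast_add, Nat.cast_one] at h1 h2
  rw [show (j : ℤ) + 1 + 1 = j + 2 by ring] at h1 h2
  rw [h1, h2]

/-- swapping adjacent letters of a word corresponds to multiplication by a generator -/
lemma word_swap_inv {n : ℕ} {c : P} {u v : List ℤ} {x z : ℤ}
    (h : word n c = u ++ x :: z :: v) :
    u.length + 2 ≤ n ∧ x = c (u.length + 1) ∧ z = c (u.length + 2) ∧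
      word n (c * sgen (u.length + 1)) = u ++ z :: x :: v := by
  obtain ⟨h1, h2, h3, h4⟩ := word_split_inv (m := [x, z]) (v := v) (by simpa using h)
  simp only [List.length_cons, List.length_nil, zero_add, Nat.reduceAdd] at h1 h3 h4
  rw [rng_succ, rng_succ, rng_zero] at h3
  simp only [List.map_cons, List.map_nil, List.cons.injEq, and_true] at h3
  push_cast at h3
  rw [add_assoc, one_add_one_eq_two] at h3
  refine ⟨h1, h3.1, h3.2, ?_⟩
  rw [word_swap c h1, ← h2, ← h3.1, ← h3.2]
  congr 3
  exact h4.symm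

/-- the combinatorial condition for an oriented Knuth step at position `i` -/
def Cond (n : ℕ) (c : P) (i : ℕ) : Prop :=
  c i < c (i + 1) ∧ ((c i < 0 ∧ 0 < c (i + 1)) ∨
    (2 ≤ i ∧ c i < c (i - 1) ∧ c (i - 1) < c (i + 1)) ∨
    (i + 2 ≤ n ∧ c i < c (i + 2) ∧ c (i + 2) < c (i + 1)))

lemma SK_word {n : ℕ} {c : P} {l' : List ℤ} (h : SK (word n c) l') :
    ∃ i, 1 ≤ i ∧ i ≤ n - 1 ∧ l' = word n (c * sgen i) ∧ Cond n c i := by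
  generalize hl : word n c = l at h
  rcases h with h | h
  · cases h with
    | k1 u v x y z h1 h2 =>
      obtain ⟨e1, e2, e3, e4⟩ := word_swap_inv (u := u ++ [y]) (v := v) (x := x) (z := z)
        (by simpa using hl)
      obtain ⟨-, f2, -, -⟩ := word_swap_inv (u := u) (v := z :: v) (x := y) (z := x)
        (by simpa using hl)
      simp only [List.length_append, List.length_singleton] at e1 e2 e3 e4
      refine ⟨u.length + 1 + 1, by omega, by omega, by rw [e4]; simp, ?_⟩
      push_cast at *
      unfold Cond
      push_cast
      rw [show (u.length : ℤ) + 1 + 1 + 1 = u.length + 1 + 2 by ring,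
        show (u.length : ℤ) + 1 + 1 - 1 = u.length + 1 by ring, ← e2, ← e3, ← f2]
      exact ⟨by omega, Or.inr (Or.inl ⟨by first | trivial | omega, h1, h2⟩)⟩
    | k2 u v x y z h1 h2 =>
      obtain ⟨e1, e2, e3, e4⟩ := word_swap_inv hl
      obtain ⟨f1, -, f3, -⟩ := word_swap_inv (u := u ++ [x]) (v := v) (x := z) (z := y)
        (by simpa using hl)
      simp only [List.length_append, List.length_singleton] at f1 f3
      refine ⟨u.length + 1, by omega, by omega, by rw [e4], ?_⟩
      push_cast at *
      unfold Cond
      push_cast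
      rw [show (u.length : ℤ) + 1 + 1 = u.length + 2 by ring, ← e2, ← e3, ← f3]
      exact ⟨by omega, Or.inr (Or.inr ⟨by omega, h1, h2⟩)⟩
  · cases h with
    | mk u v x z h1 h2 =>
      obtain ⟨e1, e2, e3, e4⟩ := word_swap_inv hl
      refine ⟨u.length + 1, by omega, by omega, by rw [e4], ?_⟩
      unfold Cond
      push_cast
      rw [show (u.length : ℤ) + 1 + 1 = u.length + 2 by ring, ← e2, ← e3]
      exact ⟨by omega, Or.inl ⟨h1, h2⟩⟩

lemma word_SK {n : ℕ} {c : P} {i : ℕ} (hi : 1 ≤ i) (hin : i ≤ n - 1) (h : Cond n c i) :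
    SK (word n c) (word n (c * sgen i)) := by
  obtain ⟨j, rfl⟩ := Nat.exists_eq_add_of_le' hi
  have hj : j + 2 ≤ n := by omega
  rcases h with ⟨h0, h | h | h⟩
  · right
    rw [word_swap c hj, word_two c hj]
    push_cast at h
    rw [show (j : ℤ) + 1 + 1 = j + 2 by ring] at h
    exact SE.mk _ _ _ _ h.1 h.2
  · left
    obtain ⟨k, rfl⟩ : ∃ k, j = k + 1 := ⟨j - 1, by omega⟩
    have hsp : (rng 1 (k + 1)).map c = (rng 1 k).map c ++ [c (k + 1)] := by
      rw [rng_split 1 k 1, rng_succ, rng_zero]; simp [add_comm]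
    rw [word_swap c hj, word_two c hj, hsp]
    push_cast at h
    push_cast
    rw [show (k : ℤ) + 1 + 1 - 1 = k + 1 by ring, show (k : ℤ) + 1 + 1 + 1 = k + 1 + 2 by ring] at h
    rw [List.append_assoc, List.append_assoc]
    exact KE.k1 _ _ _ _ _ h.2.1 h.2.2
  · left
    have hsp : (rng (j + 3) (n - j - 2)).map c =
        c (j + 3) :: (rng (j + 4) (n - j - 3)).map c := by
      rw [show n - j - 2 = n - j - 3 + 1 by omega, rng_succ]; simp
    rw [word_swap c hj, word_two c hj, hsp]
    push_cast at h
    rw [show (j : ℤ) + 1 + 1 = j + 2 by ring, show (j : ℤ) + 1 + 2 = j + 3 by ring] at h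
    exact KE.k2 _ _ _ _ _ h.2.1 h.2.2

lemma len_left {n : ℕ} (hn : 1 ≤ n) {x u : P} (hx : x ∈ Wset n) (hu : u ∈ Wset n)
    (huu : u⁻¹ = u) : len n (u * x) = len n (x⁻¹ * u) := by
  rw [← len_inv hn (mul_mem_W hu hx), mul_inv_rev, huu]

lemma s_desc_iff {n : ℕ} (hn : 1 ≤ n) {x : P} (hx : x ∈ Wset n) {i : ℕ} (hi : 1 ≤ i)
    (hin : i ≤ n - 1) : len n (sgen i * x) < len n x ↔ x⁻¹ (i + 1) < x⁻¹ i := by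
  rw [len_left hn hx (sgen_mem_W hi hin) (sgen_inv hi), ← len_inv hn hx,
    len_s_lt_iff hn (inv_mem_W hx) hi hin]

lemma t_desc_iff {n : ℕ} (hn : 1 ≤ n) {x : P} (hx : x ∈ Wset n) {i : ℕ} (hi : 1 ≤ i)
    (hin : i ≤ n) : len n (ttgen i * x) < len n x ↔ x⁻¹ i < 0 := by
  rw [len_left hn hx (ttgen_mem_W hin) (ttgen_inv i), ← len_inv hn hx,
    len_tt_lt_iff hn hi (inv_mem_W hx) hin]

lemma knuthStep_iff {n : ℕ} (hn : 1 ≤ n) {x y : P} (hx : x ∈ Wset n) :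
    knuthStep n x y ↔ ∃ i, 1 ≤ i ∧ i ≤ n - 1 ∧ y = sgen i * x ∧ Cond n x⁻¹ i := by
  unfold knuthStep
  constructor
  · rintro ⟨i, hi, rfl, hlt, hsub⟩
    refine ⟨i, hi.1, hi.2, rfl, ?_⟩
    have hs := sgen_mem_W hi.1 hi.2
    have hy := mul_mem_W hs hx
    have hasc : x⁻¹ i < x⁻¹ (i + 1) := by
      have := s_desc_iff hn hx hi.1 hi.2
      have := W_i_ne x⁻¹ i
      omega
    refine ⟨hasc, ?_⟩
    have hinv : ∀ k : ℤ, (sgen i * x)⁻¹ k = x⁻¹ (sgen i k) := by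
      intro k; rw [mul_inv_rev, sgen_inv hi.1, Equiv.Perm.mul_apply]
    rw [Set.not_subset] at hsub
    obtain ⟨u, ⟨hu, hux⟩, huy⟩ := hsub
    have huy' : ¬ (len n (u * (sgen i * x)) < len n (sgen i * x)) := fun h => huy ⟨hu, h⟩
    have htt : ∀ k : ℕ, 1 ≤ k → k ≤ n → u = ttgen k → x⁻¹ i < 0 ∧ 0 < x⁻¹ (i + 1) := by
      rintro k hk1 hk2 rfl
      rw [t_desc_iff hn hx hk1 hk2] at hux
      rw [t_desc_iff hn hy hk1 hk2, hinv, sgen_apply hi.1] at huy'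
      have := W_ne_zero (inv_mem_W hx) (i := (i : ℤ) + 1) (by omega)
      split_ifs at huy' with c1 c2 c3 c4
      · rw [c1] at hux; omega
      · rw [c2] at hux; omega
      · omega
      · omega
      · omega
    rcases hu with (rfl | ⟨k, hk, rfl⟩) | ⟨k, hk, rfl⟩
    · exact Or.inl (htt 1 le_rfl hn ttgen_one.symm)
    · right
      rw [s_desc_iff hn hx hk.1 hk.2] at hux
      rw [s_desc_iff hn hy hk.1 hk.2, hinv, hinv] at huy'
      have hi1 := hi.1
      have hk1 := hk.1
      have hk2 := hk.2
      by_cases c1 : k = i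
      · subst c1; omega
      by_cases c2 : k + 1 = i
      · left
        subst c2
        push_cast at *
        rw [show sgen (k + 1) ((k : ℤ) + 1) = k + 2 by rw [sgen_apply (by omega)]; push_cast; grind,
          show sgen (k + 1) (k : ℤ) = k by rw [sgen_apply (by omega)]; push_cast; grind] at huy'
        rw [show (k : ℤ) + 1 + 1 = k + 2 by ring] at *
        rw [show (k : ℤ) + 1 - 1 = k by ring]
        have : x⁻¹ ((k : ℤ) + 2) ≠ x⁻¹ k := fun h => by have := x⁻¹.injective h; omega
        exact ⟨by omega, by omega, by omega⟩
      by_cases c3 : k = i + 1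
      · right
        subst c3
        push_cast at *
        rw [show sgen i ((i : ℤ) + 1 + 1) = i + 2 by rw [sgen_apply hi1]; grind,
          show sgen i ((i : ℤ) + 1) = i by rw [sgen_apply hi1]; grind] at huy'
        rw [show (i : ℤ) + 1 + 1 = i + 2 by ring] at *
        have : x⁻¹ ((i : ℤ) + 2) ≠ x⁻¹ i := fun h => by have := x⁻¹.injective h; omega
        exact ⟨by omega, by omega, by omega⟩
      · rw [show sgen i (k : ℤ) = k by rw [sgen_apply hi1]; grind,
          show sgen i ((k : ℤ) + 1) = k + 1 by rw [sgen_apply hi1]; grind] at huy'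
        omega
    · exact Or.inl (htt k hk.1 hk.2 rfl)
  · rintro ⟨i, hi, hin, rfl, hasc, hc⟩
    have hs := sgen_mem_W hi hin
    have hy := mul_mem_W hs hx
    have hinv : ∀ k : ℤ, (sgen i * x)⁻¹ k = x⁻¹ (sgen i k) := by
      intro k; rw [mul_inv_rev, sgen_inv hi, Equiv.Perm.mul_apply]
    refine ⟨i, ⟨hi, hin⟩, rfl, ?_, ?_⟩
    · rw [len_left hn hx hs (sgen_inv hi), len_s_up hn (inv_mem_W hx) hi hin hasc, len_inv hn hx]
      omega
    · rw [Set.not_subset]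
      rcases hc with h | h | h
      · refine ⟨ttgen i, ⟨Or.inr ⟨i, ⟨hi, by omega⟩, rfl⟩, ?_⟩, fun h' => ?_⟩
        · exact (t_desc_iff hn hx hi (by omega)).2 h.1
        · have := (t_desc_iff hn hy hi (by omega)).1 h'.2
          rw [hinv, show sgen i (i : ℤ) = i + 1 by rw [sgen_apply hi]; simp] at this
          omega
      · obtain ⟨k, rfl⟩ : ∃ k, i = k + 1 := ⟨i - 1, by omega⟩
        push_cast at *
        rw [show (k : ℤ) + 1 - 1 = k by ring] at h
        refine ⟨sgen k, ⟨Or.inl (Or.inr ⟨k, ⟨by omega, by omega⟩, rfl⟩), ?_⟩, fun h' => ?_⟩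
        · exact (s_desc_iff hn hx (by omega) (by omega)).2 h.2.1
        · have := (s_desc_iff hn hy (by omega) (by omega)).1 h'.2
          rw [hinv, hinv,
            show sgen (k + 1) ((k : ℤ) + 1) = k + 1 + 1 by rw [sgen_apply (by omega)]; push_cast; grind,
            show sgen (k + 1) (k : ℤ) = k by rw [sgen_apply (by omega)]; push_cast; grind] at this
          omega
      · refine ⟨sgen (i + 1), ⟨Or.inl (Or.inr ⟨i + 1, ⟨by omega, by omega⟩, rfl⟩), ?_⟩,
          fun h' => ?_⟩
        · refine (s_desc_iff hn hx (by omega) (by omega)).2 ?_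
          push_cast
          rw [show (i : ℤ) + 1 + 1 = i + 2 by ring]; exact h.2.2
        · have := (s_desc_iff hn hy (by omega) (by omega)).1 h'.2
          push_cast at this
          rw [hinv, hinv,
            show sgen i ((i : ℤ) + 1 + 1) = i + 2 by rw [sgen_apply hi]; grind,
            show sgen i ((i : ℤ) + 1) = i by rw [sgen_apply hi]; grind] at this
          omega

lemma knuthStep_mem {n : ℕ} {x y : P} (h : knuthStep n x y) : x ∈ Wset n ↔ y ∈ Wset n := by
  obtain ⟨i, hi, rfl, -⟩ := h
  have hs := sgen_mem_W hi.1 hi.2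
  refine ⟨mul_mem_W hs, fun h => ?_⟩
  have := mul_mem_W hs h
  rwa [← mul_assoc, sgen_sq hi.1, one_mul] at this

lemma knuthStep_SK {n : ℕ} (hn : 1 ≤ n) {x y : P} (hx : x ∈ Wset n) (h : knuthStep n x y) :
    SK (word n x⁻¹) (word n y⁻¹) := by
  obtain ⟨i, hi, hin, rfl, hc⟩ := (knuthStep_iff hn hx).1 h
  rw [mul_inv_rev, sgen_inv hi]
  exact word_SK hi hin hc

lemma SK_knuthStep {n : ℕ} (hn : 1 ≤ n) {x : P} (hx : x ∈ Wset n) {l' : List ℤ}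
    (h : SK (word n x⁻¹) l') : ∃ y ∈ Wset n, word n y⁻¹ = l' ∧ knuthStep n x y := by
  obtain ⟨i, hi, hin, rfl, hc⟩ := SK_word h
  refine ⟨sgen i * x, mul_mem_W (sgen_mem_W hi hin) hx, ?_, ?_⟩
  · rw [mul_inv_rev, sgen_inv hi]
  · exact (knuthStep_iff hn hx).2 ⟨i, hi, hin, rfl, hc⟩

lemma SK_swap {l' l : List ℤ} (h : SK l' l) :
    ∃ u x z v, l = u ++ x :: z :: v ∧ l' = u ++ z :: x :: v := by
  rcases h with h | h
  · cases h with
    | k1 u v x y z => exact ⟨u ++ [y], z, x, v, by simp, by simp⟩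
    | k2 u v x y z => exact ⟨u, z, x, y :: v, by simp, by simp⟩
  · cases h with
    | mk u v x z => exact ⟨u, z, x, v, by simp, by simp⟩

lemma SK_knuthStep' {n : ℕ} (hn : 1 ≤ n) {x : P} (hx : x ∈ Wset n) {l' : List ℤ}
    (h : SK l' (word n x⁻¹)) : ∃ y ∈ Wset n, word n y⁻¹ = l' ∧ knuthStep n y x := by
  obtain ⟨u, a, b, v, e1, e2⟩ := SK_swap h
  obtain ⟨f1, -, -, f4⟩ := word_swap_inv e1
  rw [← e2] at f4
  have hs := sgen_mem_W (n := n) (i := u.length + 1) (by omega) (by omega)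
  have hy := mul_mem_W hs hx
  have hw : word n (sgen (u.length + 1) * x)⁻¹ = l' := by
    rw [mul_inv_rev, sgen_inv (by omega), f4]
  refine ⟨_, hy, hw, ?_⟩
  rw [← hw] at h
  obtain ⟨z, hz, hzw, hst⟩ := SK_knuthStep hn hy h
  have := inv_injective (word_inj (inv_mem_W hz) (inv_mem_W hx) hzw)
  rwa [this] at hst

lemma knuthRel_LK {n : ℕ} (hn : 1 ≤ n) {x y : P} (hx : x ∈ Wset n) (h : knuthRel n x y) :
    y ∈ Wset n ∧ LK (word n x⁻¹) (word n y⁻¹) := by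
  induction h with
  | refl => exact ⟨hx, Relation.ReflTransGen.refl⟩
  | tail _ h2 ih =>
    rcases h2 with h2 | h2
    · exact ⟨(knuthStep_mem h2).1 ih.1, ih.2.trans (LK.of (knuthStep_SK hn ih.1 h2))⟩
    · have hm := (knuthStep_mem h2).2 ih.1
      exact ⟨hm, ih.2.trans (LK.of (knuthStep_SK hn hm h2)).symm⟩

lemma LK_knuthRel_aux {n : ℕ} (hn : 1 ≤ n) {x : P} (hx : x ∈ Wset n) {l : List ℤ}
    (h : LK (word n x⁻¹) l) : ∃ y ∈ Wset n, word n y⁻¹ = l ∧ knuthRel n x y := by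
  induction h with
  | refl => exact ⟨x, hx, rfl, Relation.ReflTransGen.refl⟩
  | tail _ h2 ih =>
    obtain ⟨y, hy, rfl, hk⟩ := ih
    rcases h2 with h2 | h2
    · obtain ⟨z, hz, hzw, hst⟩ := SK_knuthStep hn hy h2
      exact ⟨z, hz, hzw, Relation.ReflTransGen.tail hk (Or.inl hst)⟩
    · obtain ⟨z, hz, hzw, hst⟩ := SK_knuthStep' hn hy h2
      exact ⟨z, hz, hzw, Relation.ReflTransGen.tail hk (Or.inr hst)⟩

lemma knuthRel_iff_LK {n : ℕ} (hn : 1 ≤ n) {x y : P} (hx : x ∈ Wset n) (hy : y ∈ Wset n) :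
    knuthRel n x y ↔ LK (word n x⁻¹) (word n y⁻¹) := by
  refine ⟨fun h => (knuthRel_LK hn hx h).2, fun h => ?_⟩
  obtain ⟨z, hz, hzw, hk⟩ := LK_knuthRel_aux hn hx h
  have := inv_injective (word_inj (inv_mem_W hz) (inv_mem_W hy) hzw)
  rwa [this] at hk

end KS

namespace KS

lemma apply_inv (w : Equiv.Perm ℤ) (x : ℤ) : w (w⁻¹ x) = x := by simp

lemma inv_apply (w : Equiv.Perm ℤ) (x : ℤ) : w⁻¹ (w x) = x := by simp

/-! ### Parabolic subgroups -/

def BP (n l : ℕ) (σ : P) : Prop :=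
  σ ∈ Wset n ∧ ∀ i : ℤ, 0 < i → 0 < σ i ∧ (i ≤ l ↔ σ i ≤ l)

lemma pos_inv {n : ℕ} {σ : P} (h : σ ∈ Wset n) (hp : ∀ i : ℤ, 0 < i → 0 < σ i) {i : ℤ}
    (hi : 0 < i) : 0 < σ⁻¹ i := by
  by_contra hc
  have h0 := W_ne_zero (inv_mem_W h) (i := i) (by omega)
  have h1 := hp (-(σ⁻¹ i)) (by omega)
  rw [h.1, KS.apply_inv] at h1
  omega

lemma neg_of_pos {n : ℕ} {σ : P} (h : σ ∈ Wset n) (hp : ∀ i : ℤ, 0 < i → 0 < σ i) {i : ℤ}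
    (hi : i < 0) : σ i < 0 := by
  have h1 := hp (-i) (by omega)
  rw [h.1] at h1
  omega

lemma BP.one (n l : ℕ) : BP n l 1 := ⟨one_mem_W n, fun i hi => by simp [hi]⟩

lemma BP.mul {n l : ℕ} {x y : P} (hx : BP n l x) (hy : BP n l y) : BP n l (x * y) := by
  refine ⟨mul_mem_W hx.1 hy.1, fun i hi => ?_⟩
  have h1 := hy.2 i hi
  have h2 := hx.2 _ h1.1
  exact ⟨h2.1, h1.2.trans h2.2⟩

lemma BP.inv {n l : ℕ} {x : P} (hx : BP n l x) : BP n l x⁻¹ := by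
  refine ⟨inv_mem_W hx.1, fun i hi => ?_⟩
  have h1 := pos_inv hx.1 (fun i hi => (hx.2 i hi).1) hi
  have h2 := (hx.2 _ h1).2
  rw [KS.apply_inv] at h2
  exact ⟨h1, h2.symm⟩

lemma BP.sgen {n l i : ℕ} (hi : 1 ≤ i) (hin : i ≤ n - 1) (hil : i ≠ l) : BP n l (sgen i) := by
  refine ⟨sgen_mem_W hi hin, fun j hj => ?_⟩
  rw [sgen_apply hi]
  grind

lemma SymLR_BP {n l : ℕ} {σ : P} (h : σ ∈ SymLR n l) : BP n l σ := by
  unfold SymLR at h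
  induction h using Subgroup.closure_induction with
  | mem x hx =>
    obtain ⟨i, hi, rfl⟩ := hx
    exact BP.sgen hi.1 hi.2.1 hi.2.2
  | one => exact BP.one n l
  | mul x y _ _ h1 h2 => exact h1.mul h2
  | inv x _ h1 => exact h1.inv

lemma BP_SymLR {n l : ℕ} (hn : 1 ≤ n) : ∀ (N : ℕ) (σ : P), BP n l σ → len n σ = N →
    σ ∈ SymLR n l := by
  intro N
  induction N using Nat.strong_induction_on with
  | _ N ih =>
  intro σ hσ hN
  by_cases h2 : ∃ i : ℕ, 1 ≤ i ∧ i ≤ n - 1 ∧ σ (i + 1) < σ i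
  · obtain ⟨i, hi, hin, hd⟩ := h2
    have hil : i ≠ l := by
      rintro rfl
      have h1 := (hσ.2 i (by omega)).2
      have h2 := (hσ.2 (i + 1) (by omega)).2
      omega
    have e := len_s_down hn hσ.1 hi hin hd
    have h3 := ih _ (by omega) (σ * sgen i) (hσ.mul (BP.sgen hi hin hil)) rfl
    have hs : sgen i ∈ SymLR n l := Subgroup.subset_closure ⟨i, ⟨hi, hin, hil⟩, rfl⟩
    have h4 := (SymLR n l).mul_mem h3 hs
    rwa [mul_assoc, sgen_sq hi, mul_one] at h4
  · have : σ = 1 := by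
      refine eq_one_of_mono hσ.1 (hσ.2 1 (by norm_num)).1 ?_
      intro i hi hin
      push Not at h2
      have := h2 i hi hin
      have := W_i_ne σ i
      omega
    rw [this]
    exact (SymLR n l).one_mem

lemma SymN_eq (n : ℕ) : SymN n = SymLR n 0 := by
  unfold SymN SymLR
  congr 1
  congr 1
  ext i
  simp only [Set.mem_Icc, Set.mem_setOf_eq]
  omega

lemma SymN_mem {n : ℕ} {σ : P} (h : σ ∈ SymN n) :
    σ ∈ Wset n ∧ ∀ i : ℤ, 0 < i → 0 < σ i := by
  rw [SymN_eq] at h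
  have := SymLR_BP h
  exact ⟨this.1, fun i hi => (this.2 i hi).1⟩

lemma SymLR_le (n l : ℕ) : SymLR n l ≤ SymN n := by
  unfold SymN SymLR
  apply Subgroup.closure_mono
  apply Set.image_mono
  rintro i ⟨h1, h2, -⟩
  exact ⟨h1, h2⟩

lemma mono_of_consec {f : ℤ → ℤ} {lo hi : ℤ} (h : ∀ i, lo ≤ i → i < hi → f i < f (i + 1))
    {p q : ℤ} (hp : lo ≤ p) (hpq : p < q) (hq : q ≤ hi) : f p < f q := by
  have : ∀ q, p + 1 ≤ q → q ≤ hi → f p < f q := by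
    intro q hq
    induction q, hq using Int.le_induction with
    | base => intro h'; exact h p hp (by omega)
    | succ k hk ih => intro h'; exact (ih (by omega)).trans (h k (by omega) (by omega))
  exact this q (by omega) hq

def YP (n l : ℕ) (a : P) : Prop :=
  a ∈ Wset n ∧ (∀ i : ℤ, 0 < i → 0 < a i) ∧
    ∀ p q : ℤ, 0 < p → p < q → (q ≤ l ∨ (l : ℤ) < p) → a p < a q

lemma Yset_YP {n l : ℕ} (hn : 1 ≤ n) {a : P} (h : a ∈ Yset n l) : YP n l a := by
  obtain ⟨h1, h2⟩ := h
  obtain ⟨hW, hpos⟩ := SymN_mem h1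
  refine ⟨hW, hpos, ?_⟩
  have key : ∀ i : ℤ, 0 < i → i ≠ l → a i < a (i + 1) := by
    intro i hi hil
    obtain ⟨k, rfl⟩ := Int.eq_ofNat_of_zero_le hi.le
    by_cases hk : k ≤ n - 1
    · have h3 := h2 (sgen k)
        (Subgroup.subset_closure ⟨k, ⟨by omega, hk, by omega⟩, rfl⟩)
      rcases W_i_ne a k with h4 | h4
      · exact h4
      · have := len_s_down hn hW (by omega) hk h4
        omega
    · rw [hW.2 (k + 1) (by rw [lt_abs]; omega)]
      by_cases hk' : k = n
      · have := (W_le hW (i := (k : ℤ)) (by omega) (by omega)).2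
        omega
      · rw [hW.2 k (by rw [lt_abs]; omega)]; omega
  intro p q hp hpq hc
  rcases hc with hc | hc
  · exact mono_of_consec (lo := p) (hi := q) (fun i h1 h2 => key i (by omega) (by omega))
      le_rfl hpq le_rfl
  · exact mono_of_consec (lo := p) (hi := q) (fun i h1 h2 => key i (by omega) (by omega))
      le_rfl hpq le_rfl

lemma exists_min (S : Set P) (hS : S.Nonempty) (f : P → ℕ) : ∃ x ∈ S, ∀ y ∈ S, f x ≤ f y := by
  obtain ⟨x, hx, h⟩ := (InvImage.wf f (wellFounded_lt (α := ℕ))).has_min S hS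
  exact ⟨x, hx, fun y hy => not_lt.1 (h y hy)⟩

lemma NegS_SymN {n : ℕ} {π : P} (h : π ∈ SymN n) :
    ∀ w : P, (NegS n (w * π)).card = (NegS n w).card := by
  unfold SymN at h
  induction h using Subgroup.closure_induction with
  | mem x hx =>
    obtain ⟨i, hi, rfl⟩ := hx
    exact fun w => NegS_s w hi.1 hi.2
  | one => simp
  | mul x y _ _ h1 h2 => intro w; rw [← mul_assoc, h2, h1]
  | inv x _ h1 => intro w; rw [← h1 (w * x⁻¹)]; simp

lemma exists_Y {n : ℕ} (hn : 1 ≤ n) {w : P} (hw : w ∈ Wset n) :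
    ∃ b ∈ Yset n (NegS n w).card, ∀ i : ℤ, 1 ≤ i → i ≤ n →
      (i ≤ (NegS n w).card ↔ w (b i) < 0) := by
  set l := (NegS n w).card with hl
  obtain ⟨π, hπ, hmin⟩ := exists_min (SymN n : Set P) ⟨1, (SymN n).one_mem⟩
    (fun π => len n (w * π))
  have hπ' : π ∈ SymN n := hπ
  have hv : w * π ∈ Wset n := mul_mem_W hw (SymN_mem hπ').1
  have hmono : ∀ i : ℤ, 1 ≤ i → i < n → (w * π) i < (w * π) (i + 1) := by
    intro i hi hin
    obtain ⟨k, rfl⟩ := Int.eq_ofNat_of_zero_le (by omega : 0 ≤ i)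
    have hs : sgen k ∈ SymN n := Subgroup.subset_closure ⟨k, ⟨by omega, by omega⟩, rfl⟩
    rcases W_i_ne (w * π) k with h | h
    · exact h
    · have h1 := len_s_down hn hv (by omega : 1 ≤ k) (by omega) h
      have h2 := hmin (π * sgen k) ((SymN n).mul_mem hπ' hs)
      rw [mul_assoc] at h1
      omega
  have hcard : (NegS n (w * π)).card = l := NegS_SymN hπ' w
  have hprop : ∀ i : ℤ, 1 ≤ i → i ≤ n → (i ≤ l ↔ w (π i) < 0) := by
    intro i hi hin
    have hm : ∀ p q : ℤ, 1 ≤ p → p < q → q ≤ n → (w * π) p < (w * π) q :=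
      fun p q h1 h2 h3 => mono_of_consec (f := fun i => (w * π) i) hmono h1 h2 h3
    constructor
    · intro h
      by_contra hc
      have hsub : NegS n (w * π) ⊆ Finset.Icc 1 (i - 1) := by
        intro j hj
        rw [mem_NegS] at hj
        rw [Finset.mem_Icc]
        refine ⟨hj.1, ?_⟩
        by_contra hji
        rcases (show i = j ∨ i < j by omega) with rfl | hlt
        · exact hc hj.2.2
        · have h1 := hm i j hi hlt hj.2.1
          have h2 := hj.2.2
          rw [Equiv.Perm.mul_apply w π i] at h1
          omega
      have := Finset.card_le_card hsub
      rw [hcard, Int.card_Icc] at this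
      omega
    · intro h
      have hsub : Finset.Icc 1 i ⊆ NegS n (w * π) := by
        intro j hj
        rw [Finset.mem_Icc] at hj
        rw [mem_NegS]
        refine ⟨hj.1, by omega, ?_⟩
        rcases (show j = i ∨ j < i by omega) with rfl | hlt
        · exact h
        · have h1 := hm j i hj.1 hlt hin
          rw [Equiv.Perm.mul_apply w π i] at h1
          omega
      have := Finset.card_le_card hsub
      rw [hcard, Int.card_Icc] at this
      omega
  obtain ⟨b, ⟨hb1, hb2⟩, hbmin⟩ := exists_min
    {π : P | π ∈ SymN n ∧ ∀ i : ℤ, 1 ≤ i → i ≤ n → (i ≤ l ↔ w (π i) < 0)} ⟨π, hπ', hprop⟩ (len n)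
  refine ⟨b, ⟨hb1, fun u hu => hbmin _ ⟨(SymN n).mul_mem hb1 (SymLR_le n l hu), ?_⟩⟩, hb2⟩
  intro i hi hin
  have hu' := SymLR_BP hu
  have h1 := hu'.2 i (by omega)
  have h2 := (W_le hu'.1 (i := i) (by omega) hin).2
  rw [Equiv.Perm.mul_apply, ← hb2 (u i) (by omega) h2]
  exact h1.2

lemma NegS_inv {n : ℕ} {w : P} (hw : w ∈ Wset n) : (NegS n w⁻¹).card = (NegS n w).card := by
  refine Finset.card_nbij' (fun p => -w⁻¹ p) (fun p => -w p) ?_ ?_ ?_ ?_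
  · intro p hp
    simp only [Finset.mem_coe, mem_NegS] at *
    have := (W_le (inv_mem_W hw) (i := p) (by omega) (by omega)).1
    rw [hw.1, KS.apply_inv]
    omega
  · intro p hp
    simp only [Finset.mem_coe, mem_NegS] at *
    have := (W_le hw (i := p) (by omega) (by omega)).1
    rw [(inv_mem_W hw).1, KS.inv_apply]
    omega
  · intro p hp
    simp only [hw.1, KS.apply_inv, neg_neg]
  · intro p hp
    simp only [(inv_mem_W hw).1, KS.inv_apply, neg_neg]

lemma NegS_card_le (n : ℕ) (w : P) : (NegS n w).card ≤ n := by
  have := Finset.card_filter_le (Finset.Icc (1 : ℤ) n) fun p => w p < 0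
  rw [Int.card_Icc] at this
  unfold NegS
  omega

/-! ### The element `a_l` -/

lemma rgen_apply (k : ℕ) (x : ℤ) : rgen (k + 1) x =
    if x = 1 then -((k : ℤ) + 1) else if x = -1 then (k : ℤ) + 1
    else if 2 ≤ x ∧ x ≤ k + 1 then x - 1 else if x ≤ -2 ∧ -(k + 1) ≤ x then x + 1 else x := by
  induction k with
  | zero => simp only [rgen, tgen_apply]; grind
  | succ k ih =>
    simp only [rgen, Equiv.Perm.mul_apply] at ih ⊢
    rw [ih, sgen_apply (by omega)]
    push_cast
    grind

lemma al_apply (l : ℕ) (x : ℤ) : al l x =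
    if 1 ≤ x ∧ x ≤ l then x - l - 1 else if -l ≤ x ∧ x ≤ -1 then x + l + 1 else x := by
  induction l generalizing x with
  | zero => simp only [al, List.range_zero, List.map_nil, List.prod_nil, Equiv.Perm.one_apply]; grind
  | succ l ih =>
    have : al (l + 1) = al l * rgen (l + 1) := by simp [al, List.range_succ]
    rw [this, Equiv.Perm.mul_apply, ih, rgen_apply]
    push_cast
    grind

lemma al_al (l : ℕ) (x : ℤ) : al l (al l x) = x := by
  rw [al_apply, al_apply]; grind

lemma al_inv (l : ℕ) : (al l)⁻¹ = al l := by
  apply inv_eq_of_mul_eq_one_left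
  ext x
  simp [al_al]

lemma al_mem_W {n l : ℕ} (h : l ≤ n) : al l ∈ Wset n := by
  refine ⟨fun x => ?_, fun x hx => ?_⟩
  · simp only [al_apply]; grind
  · rw [lt_abs] at hx; rw [al_apply]; grind

lemma odd_reduce {n : ℕ} {x y : P} (hx : x ∈ Wset n) (hy : y ∈ Wset n)
    (hp : ∀ i : ℤ, 0 < i → 0 < y i)
    (h : ∀ p q, 0 < p → p < q → y q < y p → x (y q) < x (y p)) :
    ∀ p q, p < q → y q < y p → x (y q) < x (y p) := by
  intro p q hpq hlt
  have h0 := W_zero hy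
  rcases lt_trichotomy p 0 with h1 | rfl | h1
  · rcases lt_trichotomy q 0 with h2 | rfl | h2
    · have := h (-q) (-p) (by omega) (by omega) (by rw [hy.1, hy.1]; omega)
      rw [hy.1, hy.1, hx.1, hx.1] at this
      omega
    · have := neg_of_pos hy hp h1; omega
    · have := neg_of_pos hy hp h1
      have := hp q h2
      omega
  · have := hp q hpq; omega
  · exact h p q h1 hpq hlt

lemma len_decomp {n l : ℕ} (hn : 1 ≤ n) (hl : l ≤ n) {a σ b : P} (ha : YP n l a)
    (hb : YP n l b) (hσ : BP n l σ) :
    len n (a * al l * σ * b⁻¹) = len n a + len n (al l) + len n σ + len n b := by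
  have hal := al_mem_W hl
  have hσp : ∀ i : ℤ, 0 < i → 0 < σ i := fun i hi => (hσ.2 i hi).1
  have h1 : len n (a * al l) = len n a + len n (al l) := by
    refine len_add hn ha.1 _ _ hal rfl ?_
    intro p q hpq hlt
    have h0 : al l q ≤ 0 ∧ 0 ≤ al l p := by
      rw [al_apply, al_apply] at *; grind
    have hz := W_zero ha.1
    rcases h0.1.lt_or_eq with h2 | h2
    · have := neg_of_pos ha.1 ha.2.1 h2
      rcases h0.2.lt_or_eq with h3 | h3
      · have := ha.2.1 _ h3; omega
      · rw [← h3, hz]; omega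
    · rw [h2, hz]
      exact ha.2.1 _ (by omega)
  have h2 : len n (a * al l * σ) = len n (a * al l) + len n σ := by
    refine len_add hn (mul_mem_W ha.1 hal) _ _ hσ.1 rfl ?_
    refine odd_reduce (mul_mem_W ha.1 hal) hσ.1 hσp ?_
    intro p q hp hpq hlt
    have p1 := hσ.2 p hp
    have q1 := hσ.2 q (by omega)
    simp only [Equiv.Perm.mul_apply]
    by_cases hql : q ≤ l
    · have e1 : al l (σ q) = -(l + 1 - σ q) := by rw [al_apply]; grind
      have e2 : al l (σ p) = -(l + 1 - σ p) := by rw [al_apply]; grind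
      rw [e1, e2, ha.1.1, ha.1.1]
      have := ha.2.2 (l + 1 - σ p) (l + 1 - σ q) (by omega) (by omega) (Or.inl (by omega))
      omega
    · have e1 : al l (σ q) = σ q := by rw [al_apply]; grind
      have e2 : al l (σ p) = σ p := by rw [al_apply]; grind
      rw [e1, e2]
      exact ha.2.2 _ _ (by omega) hlt (Or.inr (by omega))
  have hx := mul_mem_W (mul_mem_W ha.1 hal) hσ.1
  have h3 : len n (a * al l * σ * b⁻¹) = len n (a * al l * σ) + len n b⁻¹ := by
    refine len_add hn hx _ _ (inv_mem_W hb.1) rfl ?_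
    refine odd_reduce hx (inv_mem_W hb.1) (fun i hi => pos_inv hb.1 hb.2.1 hi) ?_
    intro p q hp hpq hlt
    have hr := pos_inv hb.1 hb.2.1 hp
    have hs := pos_inv hb.1 hb.2.1 (hp.trans hpq)
    have er : b (b⁻¹ p) = p := KS.apply_inv _ _
    have es : b (b⁻¹ q) = q := KS.apply_inv _ _
    generalize b⁻¹ p = r at *
    generalize b⁻¹ q = s at *
    have hc : s ≤ l ∧ (l : ℤ) < r := by
      by_contra hc
      have := hb.2.2 s r hs hlt (by omega)
      omega
    have r1 := hσ.2 r hr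
    have s1 := hσ.2 s hs
    simp only [Equiv.Perm.mul_apply]
    have n1 : a (al l (σ s)) < 0 := neg_of_pos ha.1 ha.2.1 (by rw [al_apply]; grind)
    have n2 : 0 < a (al l (σ r)) := ha.2.1 _ (by rw [al_apply]; grind)
    omega
  rw [h3, h2, h1, len_inv hn hb.1]

/-- existence of the canonical decomposition -/
lemma exists_decomp {n l : ℕ} (hn : 1 ≤ n) {w b : P} (hw : w ∈ Wset n)
    (hl : (NegS n w).card = l) (hb : b ∈ Yset n l)
    (hbw : ∀ i : ℤ, 1 ≤ i → i ≤ n → (i ≤ l ↔ w (b i) < 0)) :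
    ∃ a σ, IsDecomp n l w a σ b := by
  have hw' := inv_mem_W hw
  have hln : l ≤ n := hl ▸ NegS_card_le n w
  obtain ⟨a, ha, haw⟩ := exists_Y hn hw'
  rw [NegS_inv hw, hl] at ha haw
  have ya := Yset_YP hn ha
  have yb := Yset_YP hn hb
  have hσ : BP n l ((al l)⁻¹ * a⁻¹ * w * b) := by
    refine ⟨mul_mem_W (mul_mem_W (mul_mem_W (inv_mem_W (al_mem_W hln)) (inv_mem_W ya.1)) hw) yb.1,
      fun i hi => ?_⟩
    rw [al_inv]
    simp only [Equiv.Perm.mul_apply]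
    by_cases hin : i ≤ n
    · have hbp := yb.2.1 i hi
      have hbn := (W_le yb.1 (i := i) (by omega) hin).2
      have hwr := W_le hw (i := b i) (by omega) hbn
      have hw0 := W_ne_zero hw (i := b i) (by omega)
      have hwb : w⁻¹ (w (b i)) = b i := KS.inv_apply _ _
      have hbi := hbw i hi hin
      generalize w (b i) = j at *
      by_cases hil : i ≤ l
      · have hj : j < 0 := hbi.1 hil
        have hk := pos_inv ya.1 ya.2.1 (i := -j) (by omega)
        have hk2 := (W_le (inv_mem_W ya.1) (i := -j) (by omega) (by omega)).2
        have hak : a (a⁻¹ (-j)) = -j := KS.apply_inv _ _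
        have h3 := haw (a⁻¹ (-j)) (by omega) hk2
        rw [hak, hw'.1, hwb, (inv_mem_W ya.1).1] at h3
        rw [(inv_mem_W ya.1).1] at hk hk2
        rw [al_apply]
        grind
      · have hj : 0 < j := by omega
        have hk := pos_inv ya.1 ya.2.1 (i := j) (by omega)
        have hk2 := (W_le (inv_mem_W ya.1) (i := j) (by omega) (by omega)).2
        have hak : a (a⁻¹ j) = j := KS.apply_inv _ _
        have h3 := haw (a⁻¹ j) (by omega) hk2
        rw [hak, hwb] at h3
        rw [al_apply]
        grind
    · have habs : (n : ℤ) < |i| := by rw [lt_abs]; omega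
      rw [yb.1.2 i habs, hw.2 i habs, (inv_mem_W ya.1).2 i habs, (al_mem_W hln).2 i habs]
      exact ⟨hi, Iff.rfl⟩
  have hweq : w = a * al l * ((al l)⁻¹ * a⁻¹ * w * b) * b⁻¹ := by group
  refine ⟨a, (al l)⁻¹ * a⁻¹ * w * b, ha, hb, BP_SymLR hn _ _ hσ rfl, hweq, ?_⟩
  conv_lhs => rw [hweq]
  exact len_decomp hn hln ya yb hσ

end KS

namespace KS

/-! ### Comparing words -/

lemma rng_sorted (a k : ℕ) : (rng a k).Pairwise (· < ·) := by
  induction k generalizing a with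
  | zero => simp [rng_zero]
  | succ k ih =>
    rw [rng_succ, List.pairwise_cons]
    refine ⟨fun x hx => ?_, ih _⟩
    rw [mem_rng] at hx
    push_cast at hx
    omega

lemma sorted_ext {u v : List ℤ} (hu : u.Pairwise (· < ·)) (hv : v.Pairwise (· < ·))
    (h : ∀ x, x ∈ u ↔ x ∈ v) : u = v :=
  List.Pairwise.eq_of_mem_iff hu hv h

lemma rng_reverse (l : ℕ) : (rng 1 l).reverse = (rng 1 l).map (fun x => (l : ℤ) + 1 - x) := by
  rw [List.reverse_eq_iff]
  symm
  apply sorted_ext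
  · rw [List.pairwise_reverse, List.pairwise_map]
    exact (rng_sorted 1 l).imp (fun h => by omega)
  · exact rng_sorted 1 l
  · intro x
    simp only [List.mem_reverse, List.mem_map, mem_rng]
    constructor
    · rintro ⟨y, hy, rfl⟩; omega
    · intro h; exact ⟨l + 1 - x, by omega, by omega⟩

section
variable {n l : ℕ} {a σ b : P}

lemma c_apply (x : ℤ) : (a * al l * σ * b⁻¹)⁻¹ (a x) = b (σ⁻¹ (al l x)) := by
  have : (a * al l * σ * b⁻¹)⁻¹ = b * σ⁻¹ * al l * a⁻¹ := by
    simp only [mul_inv_rev, al_inv, inv_inv, mul_assoc]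
  rw [this]
  simp

lemma c_neg (ha : YP n l a) (hb : YP n l b) (hσ : BP n l σ) {x : ℤ} (h1 : 1 ≤ x) (h2 : x ≤ l) :
    (a * al l * σ * b⁻¹)⁻¹ (a x) = -b (σ⁻¹ (l + 1 - x)) := by
  rw [c_apply, al_apply, if_pos ⟨h1, h2⟩, show x - l - 1 = -((l : ℤ) + 1 - x) by ring,
    hσ.inv.1.1, hb.1.1]

lemma c_pos {x : ℤ} (h1 : l < x) :
    (a * al l * σ * b⁻¹)⁻¹ (a x) = b (σ⁻¹ x) := by
  rw [c_apply, al_apply, if_neg (by omega), if_neg (by omega)]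

lemma bs_pos (hb : YP n l b) (hσ : BP n l σ) {x : ℤ} (h1 : 0 < x) : 0 < b (σ⁻¹ x) :=
  hb.2.1 _ (hσ.inv.2 _ h1).1

lemma sorted_map (ha : YP n l a) (s k : ℕ) (hs : 1 ≤ s) (h : s + k ≤ l + 1 ∨ l < s) :
    ((rng s k).map a).Pairwise (· < ·) := by
  rw [List.pairwise_map]
  refine List.Pairwise.imp_of_mem ?_ (rng_sorted s k)
  intro x y hx hy hxy
  rw [mem_rng] at hx hy
  exact ha.2.2 x y (by omega) hxy (by omega)

lemma filter_N (hl : l ≤ n) (ha : YP n l a) (hb : YP n l b) (hσ : BP n l σ) :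
    (word n (a * al l * σ * b⁻¹)⁻¹).filter isN =
      ((((rng 1 l).map (σ⁻¹ : P)).map b).reverse).map (fun x => -x) := by
  have h1 : (rng 1 n).filter (isN ∘ ((a * al l * σ * b⁻¹)⁻¹ : P)) = (rng 1 l).map a := by
    apply sorted_ext ((rng_sorted 1 n).filter _) (sorted_map ha 1 l le_rfl (by omega))
    intro x
    simp only [List.mem_filter, mem_rng, List.mem_map, Function.comp, isN, decide_eq_true_eq]
    constructor
    · rintro ⟨hx, hc⟩
      have e := KS.apply_inv a x
      refine ⟨a⁻¹ x, ?_, e⟩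
      have hp := pos_inv ha.1 ha.2.1 (i := x) (by omega)
      refine ⟨by omega, ?_⟩
      by_contra hh
      rw [← e, c_pos (by omega)] at hc
      have := bs_pos hb hσ hp
      omega
    · rintro ⟨y, hy, rfl⟩
      rw [c_neg ha hb hσ (by omega) (by omega)]
      have := ha.2.1 y (by omega)
      have h3 := (W_le ha.1 (i := y) (by omega) (by omega)).2
      have h4 := bs_pos hb hσ (x := l + 1 - y) (by omega)
      omega
  rw [word, List.filter_map, h1, ← List.map_reverse, ← List.map_reverse, rng_reverse]
  simp only [List.map_map]
  apply List.map_congr_left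
  intro x hx
  rw [mem_rng] at hx
  exact c_neg ha hb hσ (by omega) (by omega)

lemma filter_P (hl : l ≤ n) (ha : YP n l a) (hb : YP n l b) (hσ : BP n l σ) :
    (word n (a * al l * σ * b⁻¹)⁻¹).filter isP =
      ((rng (l + 1) (n - l)).map (σ⁻¹ : P)).map b := by
  have h1 : (rng 1 n).filter (isP ∘ ((a * al l * σ * b⁻¹)⁻¹ : P)) = (rng (l + 1) (n - l)).map a := by
    apply sorted_ext ((rng_sorted 1 n).filter _)
      (sorted_map ha (l + 1) (n - l) (by omega) (by omega))
    intro x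
    simp only [List.mem_filter, mem_rng, List.mem_map, Function.comp, isP, decide_eq_true_eq]
    constructor
    · rintro ⟨hx, hc⟩
      have e := KS.apply_inv a x
      refine ⟨a⁻¹ x, ?_, e⟩
      have hp := pos_inv ha.1 ha.2.1 (i := x) (by omega)
      have hp2 := (W_le (inv_mem_W ha.1) (i := x) (by omega) (by omega)).2
      refine ⟨?_, by omega⟩
      by_contra hh
      rw [← e, c_neg ha hb hσ (by omega) (by omega)] at hc
      have := bs_pos hb hσ (x := l + 1 - a⁻¹ x) (by omega)
      omega
    · rintro ⟨y, hy, rfl⟩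
      rw [c_pos (by omega)]
      have := ha.2.1 y (by omega)
      have h3 := (W_le ha.1 (i := y) (by omega) (by omega)).2
      have h4 := bs_pos hb hσ (x := y) (by omega)
      omega
  rw [word, List.filter_map, h1]
  simp only [List.map_map]
  apply List.map_congr_left
  intro x hx
  rw [mem_rng] at hx
  exact c_pos (by omega)

end

lemma Kn_map_iff {u v : List ℤ} (b : P) (hu : ∀ x ∈ u, ∀ y ∈ u, x < y → b x < b y) :
    Kn (u.map b) (v.map b) ↔ Kn u v := by
  constructor
  · intro h
    have h2 := h.map (fun x => b⁻¹ x) (by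
      intro x hx y hy hxy
      rw [List.mem_map] at hx hy
      obtain ⟨x, hx, rfl⟩ := hx
      obtain ⟨y, hy, rfl⟩ := hy
      simp only [KS.inv_apply]
      rcases lt_trichotomy x y with h | h | h
      · exact h
      · subst h; omega
      · have := hu y hy x hx h
        omega)
    simpa only [List.map_map, Function.comp_def, KS.inv_apply, List.map_id'] using h2
  · exact fun h => h.map b hu

lemma Kn_rev_iff {u v : List ℤ} :
    Kn (u.reverse.map (fun x => -x)) (v.reverse.map (fun x => -x)) ↔ Kn u v := by
  constructor
  · intro h
    have h2 := h.rev
    simpa only [← List.map_reverse, List.reverse_reverse, List.map_map, Function.comp_def,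
      neg_neg, List.map_id'] using h2
  · exact Kn.rev

lemma filter_U {n l : ℕ} {c : P} (hl : l ≤ n) (hc : BP n l c) :
    (word n c).filter (fun x : ℤ => decide (0 < x ∧ x ≤ l)) = (rng 1 l).map c ∧
    (word n c).filter (fun x => decide ((l : ℤ) < x)) = (rng (l + 1) (n - l)).map c := by
  have h : word n c = (rng 1 l).map c ++ (rng (l + 1) (n - l)).map c := by
    rw [word, ← List.map_append, add_comm l 1, ← rng_split, Nat.add_sub_cancel' hl]
  have hU : ∀ x ∈ (rng 1 l).map c, 0 < x ∧ x ≤ l := by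
    intro x hx
    simp only [List.mem_map, mem_rng] at hx
    obtain ⟨y, hy, rfl⟩ := hx
    have := hc.2 y (by omega)
    exact ⟨this.1, this.2.1 (by omega)⟩
  have hV : ∀ x ∈ (rng (l + 1) (n - l)).map c, (l : ℤ) < x := by
    intro x hx
    simp only [List.mem_map, mem_rng] at hx
    obtain ⟨y, hy, rfl⟩ := hx
    have := hc.2 y (by omega)
    have := this.2
    omega
  rw [h, List.filter_append, List.filter_append]
  constructor
  · rw [List.filter_eq_self.2, List.filter_eq_nil_iff.2, List.append_nil]
    · intro x hx
      have := hV x hx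
      simp only [decide_eq_true_eq]
      omega
    · intro x hx
      simpa only [decide_eq_true_eq] using hU x hx
  · rw [List.filter_eq_nil_iff.2, List.filter_eq_self.2, List.nil_append]
    · intro x hx
      simpa only [decide_eq_true_eq] using hV x hx
    · intro x hx
      have := hU x hx
      simp only [decide_eq_true_eq]
      omega

lemma knuth_sigma {n l : ℕ} (hn : 1 ≤ n) (hl : l ≤ n) {σ σ' : P} (h : BP n l σ) (h' : BP n l σ') :
    knuthRel n σ σ' ↔ Kn ((rng 1 l).map (σ⁻¹ : P)) ((rng 1 l).map (σ'⁻¹ : P)) ∧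
      Kn ((rng (l + 1) (n - l)).map (σ⁻¹ : P)) ((rng (l + 1) (n - l)).map (σ'⁻¹ : P)) := by
  rw [knuthRel_iff_LK hn h.1 h'.1]
  constructor
  · intro hk
    rw [← (filter_U hl h.inv).1, ← (filter_U hl h'.inv).1, ← (filter_U hl h.inv).2,
      ← (filter_U hl h'.inv).2]
    constructor
    · apply hk.filter <;> simp only [decide_eq_true_eq] <;> intros <;> omega
    · apply hk.filter <;> simp only [decide_eq_true_eq] <;> intros <;> omega
  · rintro ⟨h1, h2⟩
    have e : ∀ c : P, word n c = (rng 1 l).map c ++ (rng (l + 1) (n - l)).map c := by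
      intro c
      rw [word, ← List.map_append, add_comm l 1, ← rng_split, Nat.add_sub_cancel' hl]
    rw [e, e]
    exact (h1.append h2).toLK

lemma knuth_decomp {n l : ℕ} (hn : 1 ≤ n) {w w' a σ a' σ' b : P}
    (hw : w ∈ Wset n) (hw' : w' ∈ Wset n) (hl : l ≤ n)
    (h : IsDecomp n l w a σ b) (h' : IsDecomp n l w' a' σ' b) :
    knuthRel n w w' ↔ knuthRel n σ σ' := by
  obtain ⟨ha, hb, hs, e, -⟩ := h
  obtain ⟨ha', -, hs', e', -⟩ := h'
  have ya := Yset_YP hn ha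
  have ya' := Yset_YP hn ha'
  have yb := Yset_YP hn hb
  have hs := SymLR_BP hs
  have hs' := SymLR_BP hs'
  rw [knuth_sigma hn hl hs hs', knuthRel_iff_LK hn hw hw',
    LK_iff (word_ne_zero (inv_mem_W hw)) (word_ne_zero (inv_mem_W hw')), e, e',
    filter_N hl ya yb hs, filter_N hl ya' yb hs', filter_P hl ya yb hs, filter_P hl ya' yb hs',
    Kn_rev_iff, Kn_map_iff, Kn_map_iff]
  · intro x hx y hy hxy
    simp only [List.mem_map, mem_rng] at hx hy
    obtain ⟨x, hx, rfl⟩ := hx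
    obtain ⟨y, hy, rfl⟩ := hy
    have h1 := hs.inv.2 x (by omega)
    have h1' := h1.2
    exact yb.2.2 _ _ h1.1 hxy (Or.inr (by omega))
  · intro x hx y hy hxy
    simp only [List.mem_map, mem_rng] at hx hy
    obtain ⟨x, hx, rfl⟩ := hx
    obtain ⟨y, hy, rfl⟩ := hy
    have h1 := hs.inv.2 x (by omega)
    have h2 := hs.inv.2 y (by omega)
    exact yb.2.2 _ _ h1.1 hxy (Or.inl (h2.2.1 (by omega)))

lemma mem_NegS_word {n : ℕ} {w : P} (hw : w ∈ Wset n) {p : ℤ} :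
    p ∈ NegS n w ↔ -p ∈ (word n w⁻¹).filter isN := by
  simp only [mem_NegS, List.mem_filter, word, List.mem_map, mem_rng, isN, decide_eq_true_eq]
  constructor
  · rintro ⟨h1, h2, h3⟩
    have h4 := (W_le hw (i := p) (by omega) h2).1
    refine ⟨⟨-w p, by omega, ?_⟩, by omega⟩
    rw [(inv_mem_W hw).1, KS.inv_apply]
  · rintro ⟨⟨i, hi, he⟩, h⟩
    have h1 := (W_le (inv_mem_W hw) (i := i) (by omega) (by omega)).1
    refine ⟨by omega, by omega, ?_⟩
    have h2 : p = -w⁻¹ i := by omega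
    rw [h2, hw.1, KS.apply_inv]
    omega

lemma main {n : ℕ} (hn : 1 ≤ n) {w w' : P} (hw : w ∈ Wset n) (hw' : w' ∈ Wset n) :
    knuthRel n w w' ↔ squig n w w' := by
  constructor
  · intro h
    have h1 := ((LK_iff (word_ne_zero (inv_mem_W hw)) (word_ne_zero (inv_mem_W hw'))).1
      ((knuthRel_iff_LK hn hw hw').1 h)).1.perm
    have hN : NegS n w = NegS n w' := by
      ext p
      rw [mem_NegS_word hw, mem_NegS_word hw', h1.mem_iff]
    obtain ⟨b, hb, hbw⟩ := exists_Y hn hw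
    have yb := Yset_YP hn hb
    obtain ⟨a, σ, hd⟩ := exists_decomp hn hw rfl hb hbw
    have hbw' : ∀ i : ℤ, 1 ≤ i → i ≤ n → (i ≤ (NegS n w).card ↔ w' (b i) < 0) := by
      intro i hi hin
      rw [hbw i hi hin]
      have h2 := yb.2.1 i (by omega)
      have h3 := (W_le yb.1 (i := i) (by omega) hin).2
      have h4 : b i ∈ NegS n w ↔ b i ∈ NegS n w' := by rw [hN]
      rw [mem_NegS, mem_NegS] at h4
      constructor
      · intro h5; exact (h4.1 ⟨by omega, h3, h5⟩).2.2
      · intro h5; exact (h4.2 ⟨by omega, h3, h5⟩).2.2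
    obtain ⟨a', σ', hd'⟩ := exists_decomp hn hw' (by rw [hN]) hb hbw'
    refine ⟨(NegS n w).card, a, σ, b, a', σ', tlen_eq hn hw, ?_, hd, hd', ?_⟩
    · rw [tlen_eq hn hw', hN]
    · exact (knuth_decomp hn hw hw' (NegS_card_le n w) hd hd').1 h
  · rintro ⟨l, a, σ, b, a', σ', h1, -, hd, hd', h⟩
    have hl : l ≤ n := by
      rw [← h1, tlen_eq hn hw]
      exact NegS_card_le n w
    exact (knuth_decomp hn hw hw' hl hd hd').2 h

end KS

/-- For `w, w' ∈ W_n`, the relations `w ↔_L w'` and `w ⇝_L w'`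
are equivalent. -/
theorem knuth_iff_squig (n : ℕ) (hn : 1 ≤ n) (w w' : P)
    (hw : w ∈ Wset n) (hw' : w' ∈ Wset n) :
    knuthRel n w w' ↔ squig n w w' := by
  exact KS.main hn hw hw'
end

section
/- Let x, y ∈ W_n with ℓ_t(x) = ℓ_t(y) = l, x ≤ y in the Bruhat order, and b_x = b_y = b. Then xb ≤ yb, and the map z ↦ z b^{−1} is an isomorphism of posets from the Bruhat interval [xb, yb] onto the Bruhat interval [x, y]. -/
open scoped Classical

namespace BH

def Word (n : ℕ) (l : List P) : Prop := ∀ g ∈ l, g ∈ Sset n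

def Gen (n : ℕ) (w : P) : Prop := ∃ l : List P, Word n l ∧ l.prod = w

def Odd' (w : P) : Prop := ∀ i : ℤ, w (-i) = - w i

/-- reflection attached to the pair `(a,b)` -/
def rf (a b : ℤ) : P :=
  if a = -b then Equiv.swap a b else Equiv.swap a b * Equiv.swap (-a) (-b)

lemma sgen_apply (i : ℕ) (hi : 1 ≤ i) (j : ℤ) : sgen i j =
    if j = i then (i : ℤ) + 1 else if j = i + 1 then (i : ℤ)
    else if j = -i then -((i : ℤ) + 1) else if j = -((i : ℤ) + 1) then -(i : ℤ) else j := by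
  simp only [sgen, Equiv.Perm.mul_apply, Equiv.swap_apply_def]
  split_ifs <;> omega

lemma tgen_apply (j : ℤ) : tgen j = if j = 1 then -1 else if j = -1 then 1 else j := by
  simp only [tgen, Equiv.swap_apply_def]

lemma mem_Sset {n : ℕ} {g : P} (h : g ∈ Sset n) :
    g = tgen ∨ ∃ i : ℕ, 1 ≤ i ∧ i ≤ n - 1 ∧ g = sgen i := by
  rcases h with h | ⟨i, ⟨h1, h2⟩, rfl⟩
  · exact Or.inl h
  · exact Or.inr ⟨i, h1, h2, rfl⟩

lemma tgen_mem (n : ℕ) : tgen ∈ Sset n := Or.inl rfl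

lemma sgen_mem {n i : ℕ} (h1 : 1 ≤ i) (h2 : i ≤ n - 1) : sgen i ∈ Sset n :=
  Or.inr ⟨i, ⟨h1, h2⟩, rfl⟩

lemma sgen_sq (i : ℕ) (hi : 1 ≤ i) : sgen i * sgen i = 1 := by
  ext j
  simp only [Equiv.Perm.mul_apply, sgen_apply i hi, Equiv.Perm.one_apply]
  split_ifs <;> omega

lemma tgen_sq : tgen * tgen = 1 := by simp [tgen]

lemma gen_sq {n : ℕ} {g : P} (h : g ∈ Sset n) : g * g = 1 := by
  rcases mem_Sset h with rfl | ⟨i, h1, _, rfl⟩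
  · exact tgen_sq
  · exact sgen_sq i h1

lemma sgen_odd (i : ℕ) (hi : 1 ≤ i) : Odd' (sgen i) := by
  intro j
  simp only [sgen_apply i hi]
  split_ifs <;> omega

lemma tgen_odd : Odd' tgen := by
  intro j
  simp only [tgen_apply]
  split_ifs <;> omega

lemma gen_odd {n : ℕ} {g : P} (h : g ∈ Sset n) : Odd' g := by
  rcases mem_Sset h with rfl | ⟨i, h1, _, rfl⟩
  · exact tgen_odd
  · exact sgen_odd i h1

lemma odd_one : Odd' 1 := fun _ => rfl

lemma odd_mul {u v : P} (hu : Odd' u) (hv : Odd' v) : Odd' (u * v) := by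
  intro i
  rw [Equiv.Perm.mul_apply, hv i, hu, Equiv.Perm.mul_apply]

lemma odd_zero {u : P} (hu : Odd' u) : u 0 = 0 := by
  have := hu 0
  simp only [neg_zero] at this
  omega

lemma odd_ne {u : P} (hu : Odd' u) {i : ℤ} (hi : i ≠ 0) : u i ≠ 0 := by
  intro h
  exact hi (u.injective (h.trans (odd_zero hu).symm))

lemma word_odd {n : ℕ} {l : List P} (h : Word n l) : Odd' l.prod := by
  induction l with
  | nil => exact odd_one
  | cons g l ih =>
    rw [List.prod_cons]
    exact odd_mul (gen_odd (h g (by simp))) (ih fun x hx => h x (by simp [hx]))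

lemma Gen.odd {n : ℕ} {w : P} (h : Gen n w) : Odd' w := by
  obtain ⟨l, h1, rfl⟩ := h
  exact word_odd h1

lemma gen_fix {n : ℕ} (hn : 1 ≤ n) {g : P} (h : g ∈ Sset n) (j : ℤ) (hj : (n : ℤ) < j) :
    g j = j := by
  rcases mem_Sset h with rfl | ⟨i, h1, _, rfl⟩
  · simp only [tgen_apply]
    split_ifs <;> omega
  · simp only [sgen_apply i h1]
    split_ifs <;> omega

lemma Gen.fix {n : ℕ} (hn : 1 ≤ n) {w : P} (h : Gen n w) (j : ℤ) (hj : (n : ℤ) < j) :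
    w j = j := by
  obtain ⟨l, h1, rfl⟩ := h
  induction l with
  | nil => rfl
  | cons g l ih =>
    rw [List.prod_cons, Equiv.Perm.mul_apply, ih fun x hx => h1 x (by simp [hx])]
    exact gen_fix hn (h1 g (by simp)) j hj

lemma Gen.one (n : ℕ) : Gen n 1 := ⟨[], by simp [Word], rfl⟩

lemma Gen.mul {n : ℕ} {u v : P} (hu : Gen n u) (hv : Gen n v) : Gen n (u * v) := by
  obtain ⟨l, h1, rfl⟩ := hu
  obtain ⟨l', h1', rfl⟩ := hv
  refine ⟨l ++ l', ?_, by simp⟩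
  intro g hg
  rcases List.mem_append.1 hg with h | h
  · exact h1 g h
  · exact h1' g h

lemma Gen.of {n : ℕ} {g : P} (h : g ∈ Sset n) : Gen n g := ⟨[g], by simpa [Word] using h, by simp⟩

lemma Gen.inv {n : ℕ} {u : P} (hu : Gen n u) : Gen n u⁻¹ := by
  obtain ⟨l, h1, rfl⟩ := hu
  induction l with
  | nil => simpa using Gen.one n
  | cons g l ih =>
    rw [List.prod_cons, mul_inv_rev]
    have hg := h1 g (by simp)
    have : g⁻¹ = g := inv_eq_of_mul_eq_one_left (gen_sq hg)
    rw [this]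
    exact (ih fun x hx => h1 x (by simp [hx])).mul (Gen.of hg)

lemma rf_conj {w : P} (hw : Odd' w) (a b : ℤ) : rf (w a) (w b) * w = w * rf a b := by
  have h : (w a = - w b) ↔ (a = -b) := by
    rw [← hw b]; exact w.injective.eq_iff
  unfold rf
  by_cases hab : a = -b
  · rw [if_pos hab, if_pos (h.2 hab), Equiv.swap_apply_apply]; group
  · rw [if_neg hab, if_neg (fun hh => hab (h.1 hh)), ← hw a, ← hw b,
      Equiv.swap_apply_apply, Equiv.swap_apply_apply]; group

lemma rf_sq (a b : ℤ) (hab : a ≠ b) (ha : a ≠ 0) (hb : b ≠ 0) : rf a b * rf a b = 1 := by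
  unfold rf
  split_ifs with h
  · simp
  · ext j
    simp only [Equiv.Perm.mul_apply, Equiv.swap_apply_def, Equiv.Perm.one_apply]
    split_ifs <;> omega

lemma rf_left (a b : ℤ) (hab : a ≠ b) (ha : a ≠ 0) (hb : b ≠ 0) : rf a b a = b := by
  unfold rf
  split_ifs with h
  · simp
  · simp only [Equiv.Perm.mul_apply, Equiv.swap_apply_def]
    split_ifs <;> omega

lemma rf_right (a b : ℤ) (hab : a ≠ b) (ha : a ≠ 0) (hb : b ≠ 0) : rf a b b = a := by
  unfold rf
  split_ifs with h
  · simp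
  · simp only [Equiv.Perm.mul_apply, Equiv.swap_apply_def]
    split_ifs <;> omega

lemma tgen_rf : tgen = rf (-1) 1 := by
  simp [tgen, rf, Equiv.swap_comm]

lemma sgen_rf (i : ℕ) (hi : 1 ≤ i) : sgen i = rf i (i + 1) := by
  unfold sgen rf
  rw [if_neg (by omega)]

lemma sgen_rf' (i : ℕ) (hi : 1 ≤ i) : sgen i = rf (-(i + 1)) (-i) := by
  unfold rf
  rw [if_neg (by omega)]
  ext j
  simp only [sgen_apply i hi, Equiv.Perm.mul_apply, Equiv.swap_apply_def]
  split_ifs <;> omega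

lemma key {n : ℕ} {g : P} (hg : g ∈ Sset n) {a b : ℤ} (hab : a < b) (ha : a ≠ 0) (hb : b ≠ 0) :
    g a < g b ∨ g = rf a b := by
  by_cases h : g a < g b
  · exact Or.inl h
  refine Or.inr ?_
  rcases mem_Sset hg with rfl | ⟨i, h1, _, rfl⟩
  · have : a = -1 ∧ b = 1 := by
      simp only [tgen_apply] at h
      split_ifs at h <;> omega
    rw [this.1, this.2]; exact tgen_rf
  · have : (a = i ∧ b = i + 1) ∨ (a = -(i + 1) ∧ b = -i) := by
      simp only [sgen_apply i h1] at h
      split_ifs at h <;> omega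
    rcases this with ⟨rfl, rfl⟩ | ⟨rfl, rfl⟩
    · exact sgen_rf i h1
    · exact sgen_rf' i h1

/-- strong exchange -/
lemma exch {n : ℕ} {l : List P} (hl : Word n l) {a b : ℤ} (hab : a < b) (ha : a ≠ 0) (hb : b ≠ 0)
    (h : l.prod b < l.prod a) :
    ∃ l' : List P, l'.Sublist l ∧ l'.length + 1 = l.length ∧ l'.prod = l.prod * rf a b := by
  induction l with
  | nil => simp at h; omega
  | cons g l ih =>
    have hl1 : Word n l := fun x hx => hl x (by simp [hx])
    have hg : g ∈ Sset n := hl g (by simp)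
    have ho := word_odd hl1
    rcases lt_trichotomy (l.prod a) (l.prod b) with h1 | h1 | h1
    · rcases key hg h1 (odd_ne ho ha) (odd_ne ho hb) with h2 | h2
      · rw [List.prod_cons] at h
        simp only [Equiv.Perm.mul_apply] at h
        omega
      · refine ⟨l, by simp, by simp, ?_⟩
        rw [List.prod_cons, mul_assoc, ← rf_conj ho, ← h2, ← mul_assoc, gen_sq hg, one_mul]
    · have := l.prod.injective h1; omega
    · obtain ⟨l', h2, h3, h4⟩ := ih hl1 h1
      refine ⟨g :: l', h2.cons_cons g, by simp [h3], ?_⟩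
      rw [List.prod_cons, h4, List.prod_cons, mul_assoc]

lemma Word.sub {n : ℕ} {l l' : List P} (hl : Word n l) (h : l'.Sublist l) : Word n l' :=
  fun g hg => hl g (h.subset hg)

lemma len_le {n : ℕ} {l : List P} (hl : Word n l) : len n l.prod ≤ l.length :=
  Nat.sInf_le ⟨l, hl, rfl, rfl⟩

lemma exists_red {n : ℕ} {w : P} (h : Gen n w) :
    ∃ l : List P, Word n l ∧ l.prod = w ∧ l.length = len n w := by
  obtain ⟨l, h1, h2⟩ := h
  exact Nat.sInf_mem (s := {k | ∃ l : List P, (∀ g ∈ l, g ∈ Sset n) ∧ l.prod = w ∧ l.length = k})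
    ⟨l.length, l, h1, h2, rfl⟩

lemma len_lt {n : ℕ} {w : P} (hw : Gen n w) {a b : ℤ} (hab : a < b) (ha : a ≠ 0) (hb : b ≠ 0)
    (h : w b < w a) : Gen n (w * rf a b) ∧ len n (w * rf a b) < len n w := by
  obtain ⟨l, h1, rfl, h3⟩ := exists_red hw
  obtain ⟨l', h4, h5, h6⟩ := exch h1 hab ha hb h
  rw [← h6]
  refine ⟨⟨l', h1.sub h4, rfl⟩, ?_⟩
  have := len_le (h1.sub h4)
  omega

/-- covering relation of the Bruhat graph -/
def Ed (u v : P) : Prop :=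
  ∃ a b : ℤ, a < b ∧ a ≠ 0 ∧ b ≠ 0 ∧ u a < u b ∧ v = u * rf a b

def Bg : P → P → Prop := Relation.ReflTransGen Ed

lemma Ed.sub {n : ℕ} {u v : P} (h : Ed u v) {l : List P} (hl : Word n l) (hv : l.prod = v) :
    ∃ l' : List P, l'.Sublist l ∧ l'.prod = u := by
  obtain ⟨a, b, hab, ha, hb, h1, rfl⟩ := h
  have h2 : l.prod b < l.prod a := by
    rw [hv, Equiv.Perm.mul_apply, Equiv.Perm.mul_apply, rf_left a b hab.ne ha hb,
      rf_right a b hab.ne ha hb]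
    exact h1
  obtain ⟨l', h3, _, h4⟩ := exch hl hab ha hb h2
  refine ⟨l', h3, ?_⟩
  rw [h4, hv, mul_assoc, rf_sq a b hab.ne ha hb, mul_one]

lemma Bg.sub {n : ℕ} {u v : P} (h : Bg u v) {l : List P} (hl : Word n l) (hv : l.prod = v) :
    ∃ l' : List P, l'.Sublist l ∧ l'.prod = u := by
  induction h generalizing l with
  | refl => exact ⟨l, List.Sublist.refl l, hv⟩
  | tail _ h2 ih =>
    obtain ⟨l1, h3, h4⟩ := h2.sub hl hv
    obtain ⟨l2, h5, h6⟩ := ih (hl.sub h3) h4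
    exact ⟨l2, h5.trans h3, h6⟩

lemma Ed.mulr {n : ℕ} {u v s : P} (h : Ed u v) (hs : s ∈ Sset n) :
    Ed (u * s) (v * s) ∨ v = u * s := by
  obtain ⟨a, b, hab, ha, hb, h1, rfl⟩ := h
  have hss : ∀ j, s (s j) = j := fun j => by
    rw [← Equiv.Perm.mul_apply, gen_sq hs]; rfl
  rcases key hs hab ha hb with h2 | h2
  · left
    refine ⟨s a, s b, h2, odd_ne (gen_odd hs) ha, odd_ne (gen_odd hs) hb, ?_, ?_⟩
    · simpa [Equiv.Perm.mul_apply, hss] using h1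
    · have := rf_conj (gen_odd hs) (s a) (s b)
      rw [hss, hss] at this
      rw [mul_assoc, this, mul_assoc]
  · right; rw [h2]

lemma Bg.mulr {n : ℕ} {u v s : P} (h : Bg u v) (hs : s ∈ Sset n) :
    Bg (u * s) v ∨ Bg (u * s) (v * s) := by
  induction h using Relation.ReflTransGen.head_induction_on with
  | refl => exact Or.inr Relation.ReflTransGen.refl
  | head h1 h2 ih =>
    rcases h1.mulr hs with h3 | h3
    · rcases ih with h4 | h4
      · exact Or.inl (Relation.ReflTransGen.head h3 h4)
      · exact Or.inr (Relation.ReflTransGen.head h3 h4)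
    · exact Or.inl (h3 ▸ h2)

/-- simple roots -/
def Up (w s : P) : Prop := ∃ a b : ℤ, a < b ∧ a ≠ 0 ∧ b ≠ 0 ∧ s = rf a b ∧ w a < w b

lemma Up.ed {w s : P} (h : Up w s) : Ed w (w * s) := by
  obtain ⟨a, b, hab, ha, hb, rfl, h1⟩ := h
  exact ⟨a, b, hab, ha, hb, h1, rfl⟩

lemma len_mul_le {n : ℕ} {w s : P} (hw : Gen n w) (hs : s ∈ Sset n) :
    len n (w * s) ≤ len n w + 1 := by
  obtain ⟨l, h1, rfl, h3⟩ := exists_red hw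
  have hwd : Word n (l ++ [s]) := by
    intro g hg
    rcases List.mem_append.1 hg with h | h
    · exact h1 g h
    · simp only [List.mem_singleton] at h; exact h ▸ hs
  have := len_le hwd
  simp at this
  omega

lemma Up.length_eq {n : ℕ} {w s : P} (h : Up w s) (hw : Gen n w) (hs : s ∈ Sset n) :
    len n (w * s) = len n w + 1 := by
  have h1 := len_mul_le hw hs
  obtain ⟨a, b, hab, ha, hb, rfl, h2⟩ := h
  have h3 := (len_lt (hw.mul (Gen.of hs)) hab ha hb (by
    rw [Equiv.Perm.mul_apply, Equiv.Perm.mul_apply, rf_left a b hab.ne ha hb,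
      rf_right a b hab.ne ha hb]
    exact h2)).2
  rw [mul_assoc, gen_sq hs, mul_one] at h3
  omega

lemma up_of_len {n : ℕ} {w : P} {a b : ℤ} (hw : Gen n w) (hab : a < b) (ha : a ≠ 0) (hb : b ≠ 0)
    (h : len n w ≤ len n (w * rf a b)) : w a < w b := by
  rcases lt_trichotomy (w a) (w b) with h1 | h1 | h1
  · exact h1
  · have := w.injective h1; omega
  · have := (len_lt hw hab ha hb h1).2; omega

lemma gen_rf {n : ℕ} {s : P} (hs : s ∈ Sset n) :
    ∃ a b : ℤ, a < b ∧ a ≠ 0 ∧ b ≠ 0 ∧ s = rf a b := by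
  rcases mem_Sset hs with rfl | ⟨i, h1, _, rfl⟩
  · exact ⟨-1, 1, by omega, by omega, by omega, tgen_rf⟩
  · exact ⟨i, i + 1, by omega, by omega, by omega, sgen_rf i h1⟩

lemma up_of_length {n : ℕ} {w s : P} (hw : Gen n w) (hs : s ∈ Sset n)
    (h : len n w ≤ len n (w * s)) : Up w s := by
  obtain ⟨a, b, hab, ha, hb, rfl⟩ := gen_rf hs
  exact ⟨a, b, hab, ha, hb, rfl, up_of_len hw hab ha hb h⟩

/-- prefix of a reduced word -/
lemma red_prefix {n : ℕ} {l : List P} {s : P} (hl : Word n (l ++ [s]))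
    (hr : (l ++ [s]).length = len n (l ++ [s]).prod) :
    Word n l ∧ s ∈ Sset n ∧ l.length = len n l.prod ∧ Up l.prod s := by
  have h1 : Word n l := hl.sub (List.sublist_append_left l [s])
  have hs : s ∈ Sset n := hl s (by simp)
  have h2 := len_le h1
  have h3 := len_mul_le ⟨l, h1, rfl⟩ hs
  simp only [List.prod_append, List.prod_singleton, List.length_append, List.length_singleton] at hr
  refine ⟨h1, hs, by omega, up_of_length ⟨l, h1, rfl⟩ hs (by omega)⟩

lemma sublist_snoc {l l' : List P} {s : P} (h : l'.Sublist (l ++ [s])) :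
    ∃ l1 : List P, l1.Sublist l ∧ (l' = l1 ∨ l' = l1 ++ [s]) := by
  obtain ⟨l1, l2, rfl, h1, h2⟩ := List.sublist_append_iff.1 h
  refine ⟨l1, h1, ?_⟩
  rcases List.sublist_singleton.1 h2 with rfl | rfl
  · left; simp
  · right; rfl

lemma Bg_of_sub {n : ℕ} {l : List P} : ∀ {l' : List P}, Word n l → l.length = len n l.prod →
    l'.Sublist l → Bg l'.prod l.prod := by
  induction l using List.reverseRecOn with
  | nil =>
    intro l' _ _ h
    rw [List.sublist_nil.1 h]; exact Relation.ReflTransGen.refl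
  | append_singleton l s ih =>
    intro l' hl hr h
    obtain ⟨h1, hs, h2, h3⟩ := red_prefix hl hr
    obtain ⟨l1, h4, h5⟩ := sublist_snoc h
    have h6 := ih h1 h2 h4
    have h7 : Ed l.prod (l ++ [s]).prod := by
      simpa using h3.ed
    rcases h5 with rfl | rfl
    · exact Relation.ReflTransGen.tail h6 h7
    · rw [List.prod_append, List.prod_singleton]
      rcases h6.mulr hs with h8 | h8
      · exact Relation.ReflTransGen.tail h8 h7
      · simpa using h8

lemma bruhat_gen {n : ℕ} {x y : P} (h : bruhat n x y) : Gen n x ∧ Gen n y := by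
  obtain ⟨l, l', h1, h2, h3, h4, h5⟩ := h
  exact ⟨⟨l', Word.sub h1 h4, h5⟩, ⟨l, h1, h2⟩⟩

lemma bruhat_iff {n : ℕ} {x y : P} (hy : Gen n y) : bruhat n x y ↔ Bg x y := by
  constructor
  · rintro ⟨l, l', h1, rfl, h3, h4, rfl⟩
    exact Bg_of_sub h1 h3 h4
  · intro h
    obtain ⟨l, h1, h2, h3⟩ := exists_red hy
    obtain ⟨l', h4, h5⟩ := h.sub h1 h2
    exact ⟨l, l', h1, h2, h3, h4, h5⟩

lemma bg_iff_mul {n : ℕ} {u v s : P} (hv : Gen n v) (hs : s ∈ Sset n)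
    (hus : Up u s) (hvs : Up v s) : Bg u v ↔ Bg (u * s) (v * s) := by
  constructor
  · intro h
    rcases h.mulr hs with h1 | h1
    · exact Relation.ReflTransGen.tail h1 hvs.ed
    · exact h1
  · intro h
    obtain ⟨l, h1, rfl, h3⟩ := exists_red hv
    have hwd : Word n (l ++ [s]) := by
      intro g hg
      rcases List.mem_append.1 hg with h | h
      · exact h1 g h
      · simp only [List.mem_singleton] at h; exact h ▸ hs
    obtain ⟨l', h4, h5⟩ := h.sub hwd (by simp)
    obtain ⟨l1, h6, h7⟩ := sublist_snoc h4
    have h8 := Bg_of_sub h1 h3 h6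
    rcases h7 with rfl | rfl
    · rw [h5] at h8
      exact Relation.ReflTransGen.head hus.ed h8
    · rw [List.prod_append, List.prod_singleton] at h5
      rwa [mul_right_cancel h5] at h8

/-! sign pattern -/

def Pat (l : ℕ) (u : P) : Prop :=
  (∀ i : ℤ, 0 < i → i ≤ l → u i < 0) ∧ ∀ i : ℤ, (l : ℤ) < i → 0 < u i

lemma sgen_pos (i : ℕ) (hi : 1 ≤ i) (j : ℤ) (hj : 0 < j) : 0 < sgen i j := by
  rw [sgen_apply i hi]; split_ifs <;> omega

lemma main_iff {n l : ℕ} : ∀ (k : ℕ) (c : P), Gen n c → len n c = k →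
    (∀ j : ℤ, 0 < j → 0 < c j) →
    (∀ p q : ℤ, 0 < p → p < q → c q < c p → c q ≤ l ∧ l < c p) →
    ∀ u v : P, Gen n u → Gen n v → Pat l u → Pat l v →
      (Bg u v ↔ Bg (u * c) (v * c)) := by
  intro k
  induction k with
  | zero =>
    intro c hc hk _ _ u v _ _ _ _
    obtain ⟨w, _, h2, h3⟩ := exists_red hc
    rw [hk, List.length_eq_zero_iff] at h3
    subst h3
    simp at h2
    simp [← h2]
  | succ k ih =>
    intro c hc hk hpos hinv u v hu hv hpu hpv
    obtain ⟨w, h1, h2, h3⟩ := exists_red hc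
    obtain ⟨w', g, rfl⟩ : ∃ w' g, w = w' ++ [g] := by
      rcases List.eq_nil_or_concat w with h | ⟨a, b, h⟩
      · subst h; simp at h3; omega
      · exact ⟨a, b, by simpa using h⟩
    have h4 := red_prefix h1 (by rw [h3, h2])
    obtain ⟨h5, hg, h6, h7⟩ := h4
    have hc' : Gen n w'.prod := ⟨w', h5, rfl⟩
    have hcg : c = w'.prod * g := by rw [← h2]; simp
    have hlen : len n w'.prod = k := by
      have := h7.length_eq hc' hg
      rw [← hcg] at this; omega
    have hlt := h7.length_eq hc' hg
    rcases mem_Sset hg with rfl | ⟨i, hi1, hi2, rfl⟩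
    · exfalso
      have h8 : w'.prod (-1) < w'.prod 1 := by
        apply up_of_len hc' (by omega) (by omega) (by omega)
        rw [← tgen_rf]; omega
      have h9 := hpos 1 (by omega)
      rw [hcg, Equiv.Perm.mul_apply, tgen_apply, if_pos rfl] at h9
      rw [hc'.odd 1] at h8 h9
      omega
    · have h8 : w'.prod i < w'.prod (i + 1) := by
        apply up_of_len hc' (by omega) (by omega) (by omega)
        rw [← sgen_rf i hi1]; omega
      have hci : c i = w'.prod (i + 1) := by
        rw [hcg, Equiv.Perm.mul_apply, sgen_apply i hi1, if_pos rfl]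
      have hci1 : c (i + 1) = w'.prod i := by
        rw [hcg, Equiv.Perm.mul_apply, sgen_apply i hi1, if_neg (by omega), if_pos rfl]
      have hcs : ∀ j, w'.prod j = c (sgen i j) := by
        intro j
        rw [hcg, ← Equiv.Perm.mul_apply, mul_assoc, sgen_sq i hi1, mul_one]
      have hpos' : ∀ j : ℤ, 0 < j → 0 < w'.prod j := by
        intro j hj
        rw [hcs]; exact hpos _ (sgen_pos i hi1 j hj)
      have hinv' : ∀ p q : ℤ, 0 < p → p < q → w'.prod q < w'.prod p →
          w'.prod q ≤ l ∧ l < w'.prod p := by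
        intro p q hp hpq hqp
        by_cases hh : sgen i p < sgen i q
        · rw [hcs, hcs] at hqp ⊢
          exact hinv _ _ (sgen_pos i hi1 p hp) hh hqp
        · exfalso
          have : p = i ∧ q = i + 1 := by
            simp only [sgen_apply i hi1] at hh
            split_ifs at hh <;> omega
          rw [this.1, this.2] at hqp
          omega
      have hst := hinv i (i + 1) (by omega) (by omega) (by rw [hci, hci1]; exact h8)
      rw [hci, hci1] at hst
      have hup : ∀ z : P, Pat l z → Up (z * w'.prod) (sgen i) := by
        intro z hz
        refine ⟨i, i + 1, by omega, by omega, by omega, sgen_rf i hi1, ?_⟩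
        rw [Equiv.Perm.mul_apply, Equiv.Perm.mul_apply]
        exact (hz.1 _ (hpos' _ (by omega)) hst.1).trans (hz.2 _ hst.2)
      rw [hcg, ← mul_assoc, ← mul_assoc, ← bg_iff_mul (hv.mul hc') hg (hup u hpu) (hup v hpv)]
      exact ih _ hc' hlen hpos' hinv' u v hu hv hpu hpv

/-! counting negative values -/

noncomputable def cn (n : ℕ) (k : ℤ) (w : P) : ℕ := ((Finset.Icc k (n : ℤ)).filter (fun j => w j < 0)).card

lemma cn_succ {n : ℕ} {k : ℤ} (hk : k ≤ n) (w : P) :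
    cn n k w = (if w k < 0 then 1 else 0) + cn n (k + 1) w := by
  unfold cn
  have : Finset.Icc k (n : ℤ) = insert k (Finset.Icc (k + 1) (n : ℤ)) := by
    ext j; simp only [Finset.mem_Icc, Finset.mem_insert]; omega
  rw [this, Finset.filter_insert]
  split_ifs with h
  · rw [Finset.card_insert_of_notMem (by simp), add_comm]
  · simp

lemma cn_sgen {n i : ℕ} (h1 : 1 ≤ i) (h2 : i + 1 ≤ n) (w : P) {k : ℤ} (hk : 1 ≤ k)
    (hki : k ≠ i + 1) : cn n k (w * sgen i) = cn n k w := by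
  unfold cn
  apply Finset.card_equiv (sgen i)
  intro j
  rw [Finset.mem_filter, Finset.mem_filter, Finset.mem_Icc, Finset.mem_Icc, Equiv.Perm.mul_apply]
  have : (k ≤ j ∧ j ≤ n) ↔ (k ≤ sgen i j ∧ sgen i j ≤ n) := by
    rw [sgen_apply i h1]; split_ifs <;> omega
  rw [this]

lemma cn_tgen {n : ℕ} (w : P) {k : ℤ} (hk : 2 ≤ k) : cn n k (w * tgen) = cn n k w := by
  unfold cn
  congr 1
  apply Finset.filter_congr
  intro j hj
  rw [Finset.mem_Icc] at hj
  rw [Equiv.Perm.mul_apply, tgen_apply, if_neg (by omega), if_neg (by omega)]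

lemma cn_mono {n : ℕ} (hn : 1 ≤ n) {l : List P} : ∀ {l' : List P}, Word n l →
    l.length = len n l.prod → l'.Sublist l → ∀ k : ℤ, 1 ≤ k → cn n k l'.prod ≤ cn n k l.prod := by
  induction l using List.reverseRecOn with
  | nil =>
    intro l' _ _ h k _
    rw [List.sublist_nil.1 h]
  | append_singleton l s ih =>
    intro l' hl hr h k hk
    obtain ⟨h1, hs, h2, h3⟩ := red_prefix hl hr
    obtain ⟨l1, h4, h5⟩ := sublist_snoc h
    have h6 := fun k hk => ih h1 h2 h4 k hk
    have hg : Gen n l.prod := ⟨l, h1, rfl⟩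
    have hlen := h3.length_eq hg hs
    rw [List.prod_append, List.prod_singleton]
    have h5' : l'.prod = l1.prod ∨ l'.prod = l1.prod * s := by
      rcases h5 with rfl | rfl
      · left; rfl
      · right; simp
    generalize l'.prod = x at *
    generalize l1.prod = x0 at *
    generalize l.prod = y0 at *
    rcases mem_Sset hs with rfl | ⟨i, hi1, hi2, rfl⟩
    · by_cases hk2 : 2 ≤ k
      · rcases h5' with rfl | rfl <;> simp only [cn_tgen _ hk2] <;> exact h6 k hk
      · obtain rfl : k = 1 := by omega
        have h8 : y0 (-1) < y0 1 := by
          apply up_of_len hg (by omega) (by omega) (by omega)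
          rw [← tgen_rf]; omega
        rw [hg.odd 1] at h8
        have e1 : cn n 1 (y0 * tgen) = 1 + cn n (1 + 1) y0 := by
          rw [cn_succ (by omega), cn_tgen _ (by omega), Equiv.Perm.mul_apply, tgen_apply,
            if_pos rfl, hg.odd 1, if_pos (by omega)]
        have e2 : cn n 1 x ≤ 1 + cn n (1 + 1) x0 := by
          rcases h5' with rfl | rfl
          · rw [cn_succ (by omega)]; split_ifs <;> omega
          · rw [cn_succ (by omega), cn_tgen _ (by omega)]; split_ifs <;> omega
        have := h6 (1 + 1) (by omega)
        omega
    · have h8 : y0 i < y0 (i + 1) := by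
        apply up_of_len hg (by omega) (by omega) (by omega)
        rw [← sgen_rf i hi1]; omega
      by_cases hki : k = i + 1
      · subst hki
        have ev : ∀ z : P, cn n (i + 1) (z * sgen i) =
            (if z i < 0 then 1 else 0) + cn n ((i : ℤ) + 1 + 1) z := by
          intro z
          have hv : sgen i ((i : ℤ) + 1) = i := by
            rw [sgen_apply i hi1, if_neg (by omega), if_pos rfl]
          rw [cn_succ (by omega), cn_sgen hi1 (by omega) _ (by omega) (by omega),
            Equiv.Perm.mul_apply, hv]
        have es : ∀ z : P, cn n (i + 1) z =
            (if z (i + 1) < 0 then 1 else 0) + cn n ((i : ℤ) + 1 + 1) z := fun z =>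
          cn_succ (by omega) z
        have e0 : ∀ z : P, cn n i z = (if z i < 0 then 1 else 0) + cn n (i + 1) z := fun z =>
          cn_succ (by omega) z
        have a1 := h6 i (by omega)
        have a2 := h6 (i + 1) (by omega)
        have a3 := h6 ((i : ℤ) + 1 + 1) (by omega)
        rw [ev y0]
        rw [e0, e0, es, es] at a1
        rw [es, es] at a2
        rcases h5' with rfl | rfl
        · rw [es]
          split_ifs at a1 a2 ⊢ <;> omega
        · rw [ev]
          split_ifs at a1 a2 ⊢ <;> omega
      · rcases h5' with rfl | rfl <;>
          simp only [cn_sgen hi1 (show i + 1 ≤ n by omega) _ hk hki] <;> exact h6 k hk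

lemma cn_bruhat {n : ℕ} (hn : 1 ≤ n) {x y : P} (h : bruhat n x y) (k : ℤ) (hk : 1 ≤ k) :
    cn n k x ≤ cn n k y := by
  obtain ⟨l, l', h1, rfl, h3, h4, rfl⟩ := h
  exact cn_mono hn h1 h3 h4 k hk

def SameSign (x y : P) : Prop := ∀ i : ℤ, 0 < i → (x i < 0 ↔ y i < 0)

lemma cn_congr {n : ℕ} {x y : P} (h : SameSign x y) (k : ℤ) (hk : 1 ≤ k) :
    cn n k x = cn n k y := by
  unfold cn
  congr 1
  apply Finset.filter_congr
  intro j hj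
  rw [Finset.mem_Icc] at hj
  exact h j (by omega)

lemma sandwich {n : ℕ} (hn : 1 ≤ n) {x y z : P} (hxz : bruhat n x z) (hzy : bruhat n z y)
    (h : SameSign x y) : SameSign x z := by
  have hc : ∀ k : ℤ, 1 ≤ k → cn n k x = cn n k z := by
    intro k hk
    have h1 := cn_bruhat hn hxz k hk
    have h2 := cn_bruhat hn hzy k hk
    have h3 := cn_congr (n := n) h k hk
    omega
  intro i hi
  by_cases hin : i ≤ n
  · have h1 := hc i (by omega)
    have h2 := hc (i + 1) (by omega)
    rw [cn_succ hin, cn_succ hin] at h1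
    by_cases hxi : x i < 0 <;> by_cases hzi : z i < 0 <;> simp only [hxi, hzi, if_true, if_false] at h1 ⊢ <;> omega
  · rw [(bruhat_gen hxz).1.fix hn i (by omega), (bruhat_gen hxz).2.fix hn i (by omega)]

lemma Pat.same {l : ℕ} {u v : P} (hu : Pat l u) (hv : Pat l v) : SameSign u v := by
  intro i hi
  by_cases h : i ≤ l
  · have := hu.1 i hi h
    have := hv.1 i hi h
    tauto
  · have := hu.2 i (by omega)
    have := hv.2 i (by omega)
    omega

lemma Pat.of_same {l : ℕ} {u v : P} (hu : Pat l u) (ho : Odd' v) (h : SameSign u v) : Pat l v := by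
  refine ⟨fun i hi hl => (h i hi).1 (hu.1 i hi hl), fun i hi => ?_⟩
  have h1 := hu.2 i hi
  have h2 := h i (by omega)
  have h3 := odd_ne ho (show i ≠ 0 by omega)
  omega

/-! the decomposition -/

lemma symN_prop {n : ℕ} {w : P} (h : w ∈ SymN n) :
    Gen n w ∧ (∀ j : ℤ, 0 < j → 0 < w j) := by
  have : Gen n w ∧ (∀ j : ℤ, 0 < j → 0 < w j) ∧ (∀ j : ℤ, 0 < j → 0 < w⁻¹ j) := by
    induction h using Subgroup.closure_induction with
    | mem x hx =>
      obtain ⟨i, ⟨h1, h2⟩, rfl⟩ := hx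
      refine ⟨Gen.of (sgen_mem h1 h2), sgen_pos i h1, ?_⟩
      rw [inv_eq_of_mul_eq_one_left (sgen_sq i h1)]
      exact sgen_pos i h1
    | one => exact ⟨Gen.one n, fun j h => h, fun j h => by simpa using h⟩
    | mul x y _ _ hx hy =>
      refine ⟨hx.1.mul hy.1, fun j hj => hx.2.1 _ (hy.2.1 j hj), fun j hj => ?_⟩
      rw [mul_inv_rev]
      exact hy.2.2 _ (hx.2.2 j hj)
    | inv x _ hx => exact ⟨hx.1.inv, hx.2.2, by simpa using hx.2.1⟩
  exact ⟨this.1, this.2.1⟩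

lemma symLR_prop {n l : ℕ} {w : P} (h : w ∈ SymLR n l) :
    Gen n w ∧ ∀ j : ℤ, 0 < j → (0 < w j ∧ (w j ≤ l ↔ j ≤ l)) := by
  have hs : ∀ i : ℕ, 1 ≤ i → i ≠ l → ∀ j : ℤ, 0 < j → (0 < sgen i j ∧ (sgen i j ≤ l ↔ j ≤ l)) := by
    intro i h1 h2 j hj
    rw [sgen_apply i h1]
    split_ifs <;> omega
  have : Gen n w ∧ (∀ j : ℤ, 0 < j → (0 < w j ∧ (w j ≤ l ↔ j ≤ l))) ∧
      (∀ j : ℤ, 0 < j → (0 < w⁻¹ j ∧ (w⁻¹ j ≤ l ↔ j ≤ l))) := by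
    induction h using Subgroup.closure_induction with
    | mem x hx =>
      obtain ⟨i, ⟨h1, h2, h3⟩, rfl⟩ := hx
      refine ⟨Gen.of (sgen_mem h1 h2), hs i h1 h3, ?_⟩
      rw [inv_eq_of_mul_eq_one_left (sgen_sq i h1)]
      exact hs i h1 h3
    | one => exact ⟨Gen.one n, fun j h => by simpa using h, fun j h => by simpa using h⟩
    | mul x y _ _ hx hy =>
      refine ⟨hx.1.mul hy.1, fun j hj => ?_, fun j hj => ?_⟩
      · have h1 := hy.2.1 j hj
        have h2 := hx.2.1 _ h1.1
        rw [Equiv.Perm.mul_apply]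
        exact ⟨h2.1, h2.2.trans h1.2⟩
      · have h1 := hx.2.2 j hj
        have h2 := hy.2.2 _ h1.1
        rw [mul_inv_rev, Equiv.Perm.mul_apply]
        exact ⟨h2.1, h2.2.trans h1.2⟩
    | inv x _ hx => exact ⟨hx.1.inv, hx.2.2, by simpa using hx.2.1⟩
  exact ⟨this.1, this.2.1⟩

lemma rgen_prop (k : ℕ) : rgen (k + 1) 1 = -((k : ℤ) + 1) ∧
    (∀ j : ℤ, 2 ≤ j → j ≤ k + 1 → rgen (k + 1) j = j - 1) ∧
    (∀ j : ℤ, (k : ℤ) + 1 < j → rgen (k + 1) j = j) := by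
  induction k with
  | zero =>
    simp only [rgen, tgen_apply]
    refine ⟨by simp, fun j h1 h2 => by simp at h2; omega, fun j h1 => ?_⟩
    simp at h1
    rw [if_neg (by omega), if_neg (by omega)]
  | succ k ih =>
    obtain ⟨h1, h2, h3⟩ := ih
    have e : rgen (k + 1 + 1) = sgen (k + 1) * rgen (k + 1) := rfl
    refine ⟨?_, fun j hj1 hj2 => ?_, fun j hj => ?_⟩
    · rw [e, Equiv.Perm.mul_apply, h1, sgen_apply _ (by omega)]
      push_cast
      split_ifs <;> omega
    · rw [e, Equiv.Perm.mul_apply, sgen_apply _ (by omega)]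
      push_cast at *
      by_cases h : j ≤ k + 1
      · rw [h2 j hj1 h]; split_ifs <;> omega
      · rw [h3 j (by omega)]; split_ifs <;> omega
    · push_cast at hj
      rw [e, Equiv.Perm.mul_apply, sgen_apply _ (by omega), h3 j (by omega)]
      push_cast
      split_ifs <;> omega

lemma rgen_odd (k : ℕ) : Odd' (rgen (k + 1)) := by
  induction k with
  | zero => exact tgen_odd
  | succ k ih => exact odd_mul (sgen_odd _ (by omega)) ih

lemma al_succ (l : ℕ) : al (l + 1) = al l * rgen (l + 1) := by
  simp [al, List.range_succ]

lemma al_prop (l : ℕ) : Odd' (al l) ∧ (∀ i : ℤ, 0 < i → i ≤ l → al l i < 0) ∧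
    ∀ i : ℤ, (l : ℤ) < i → al l i = i := by
  induction l with
  | zero =>
    have : al 0 = 1 := by simp [al]
    rw [this]
    refine ⟨odd_one, fun i h1 h2 => ?_, fun i _ => rfl⟩
    push_cast at h2; omega
  | succ l ih =>
    obtain ⟨h1, h2, h3⟩ := ih
    obtain ⟨r1, r2, r3⟩ := rgen_prop l
    rw [al_succ]
    refine ⟨odd_mul h1 (rgen_odd l), fun i hi hl => ?_, fun i hi => ?_⟩
    · push_cast at hl
      rw [Equiv.Perm.mul_apply]
      by_cases h : i = 1
      · rw [h, r1, h1, h3 _ (by omega)]; omega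
      · rw [r2 i (by omega) hl]
        exact h2 _ (by omega) (by omega)
    · push_cast at hi
      rw [Equiv.Perm.mul_apply, r3 i hi, h3 i (by omega)]

lemma decomp_pat {n l : ℕ} {w a σ b : P} (h : IsDecomp n l w a σ b) : Pat l (w * b) := by
  obtain ⟨⟨ha, _⟩, _, hσ, rfl, _⟩ := h
  have ha' := symN_prop ha
  have hσ' := (symLR_prop hσ).2
  obtain ⟨_, l2, l3⟩ := al_prop l
  rw [inv_mul_cancel_right]
  refine ⟨fun i hi hl => ?_, fun i hi => ?_⟩
  · have h1 := hσ' i hi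
    have h2 := l2 (σ i) h1.1 (h1.2.2 hl)
    have h3 := ha'.2 (-(al l (σ i))) (by omega)
    rw [ha'.1.odd] at h3
    simp only [Equiv.Perm.mul_apply]
    omega
  · have h1 := hσ' i (by omega)
    simp only [Equiv.Perm.mul_apply]
    rw [l3 (σ i) (by omega)]
    exact ha'.2 _ h1.1

lemma Y_step {n l : ℕ} (hn : 1 ≤ n) {b : P} (hb : b ∈ Yset n l) (i : ℤ) (hi : 0 < i)
    (hil : i ≠ l) : b i < b (i + 1) := by
  obtain ⟨h1, h2⟩ := hb
  have hg := (symN_prop h1).1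
  by_cases hin : i + 1 ≤ n
  · obtain ⟨m, rfl⟩ : ∃ m : ℕ, i = m := ⟨i.toNat, by omega⟩
    apply up_of_len hg (by omega) (by omega) (by omega)
    rw [← sgen_rf m (by omega)]
    apply h2
    apply Subgroup.subset_closure
    exact ⟨m, ⟨by omega, by omega, by omega⟩, rfl⟩
  · rw [hg.fix hn (i + 1) (by omega)]
    by_contra h
    have h4 : b (b i) = b i := hg.fix hn (b i) (by omega)
    have h5 := b.injective h4
    omega

lemma Y_mono {n l : ℕ} (hn : 1 ≤ n) {b : P} (hb : b ∈ Yset n l) (i : ℤ) (hi : 0 < i) (d : ℕ)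
    (h : i + d + 1 ≤ l ∨ (l : ℤ) < i) : b i < b (i + d + 1) := by
  induction d with
  | zero => 
    have := Y_step hn hb i hi (by push_cast at h; omega)
    simpa using this
  | succ d ih =>
    push_cast at h
    have h1 := ih (by omega)
    have h2 := Y_step hn hb (i + d + 1) (by omega) (by omega)
    push_cast
    rw [show i + ((d : ℤ) + 1) + 1 = i + d + 1 + 1 by ring]
    omega

lemma Y_inv {n l : ℕ} (hn : 1 ≤ n) {b : P} (hb : b ∈ Yset n l) (p q : ℤ) (hp : 0 < p)
    (hpq : p < q) (h : b⁻¹ q < b⁻¹ p) : b⁻¹ q ≤ l ∧ l < b⁻¹ p := by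
  have hpos := (symN_prop ((SymN n).inv_mem hb.1)).2
  have h1 := hpos q (by omega)
  obtain ⟨d, hd⟩ : ∃ d : ℕ, b⁻¹ p = b⁻¹ q + d + 1 := ⟨(b⁻¹ p - b⁻¹ q - 1).toNat, by omega⟩
  by_contra hh
  have h2 := Y_mono hn hb (b⁻¹ q) h1 d (by omega)
  rw [← hd] at h2
  simp at h2
  omega

end BH

/-- If `ℓ_t(x) = ℓ_t(y) = l`, `x ≤ y` and `b_x = b_y = b`,
then `xb ≤ yb` and `z ↦ z b⁻¹` is a poset isomorphism `[xb, yb] → [x, y]`. -/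
theorem decomp_interval_iso (n l : ℕ) (hn : 1 ≤ n) (x y : P)
    (hx : x ∈ Wset n) (hy : y ∈ Wset n)
    (htx : tlen n x = l) (hty : tlen n y = l) (hxy : bruhat n x y)
    (ax σx ay σy b : P)
    (hdx : IsDecomp n l x ax σx b) (hdy : IsDecomp n l y ay σy b) :
    bruhat n (x * b) (y * b) ∧
    Set.BijOn (fun z => z * b⁻¹)
      {z | bruhat n (x * b) z ∧ bruhat n z (y * b)}
      {z | bruhat n x z ∧ bruhat n z y} ∧
    (∀ z z', (bruhat n (x * b) z ∧ bruhat n z (y * b)) →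
      (bruhat n (x * b) z' ∧ bruhat n z' (y * b)) →
      (bruhat n z z' ↔ bruhat n (z * b⁻¹) (z' * b⁻¹))) := by
  have hbY := hdx.2.1
  obtain ⟨hbG, hbpos⟩ := BH.symN_prop hbY.1
  have hcS := BH.symN_prop ((SymN n).inv_mem hbY.1)
  obtain ⟨hxG, hyG⟩ := BH.bruhat_gen hxy
  have hpx := BH.decomp_pat hdx
  have hpy := BH.decomp_pat hdy
  have hux := hxG.mul hbG
  have huy := hyG.mul hbG
  have key : ∀ u v : P, BH.Gen n u → BH.Gen n v → BH.Pat l u → BH.Pat l v →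
      (bruhat n u v ↔ bruhat n (u * b⁻¹) (v * b⁻¹)) := by
    intro u v hu hv hpu hpv
    rw [BH.bruhat_iff hv, BH.bruhat_iff (hv.mul hbG.inv)]
    exact BH.main_iff _ b⁻¹ hbG.inv rfl hcS.2 (BH.Y_inv hn hbY) u v hu hv hpu hpv
  have ex : x * b * b⁻¹ = x := by group
  have ey : y * b * b⁻¹ = y := by group
  have hpat : ∀ z, bruhat n (x * b) z → bruhat n z (y * b) → BH.Pat l z := by
    intro z h1 h2
    exact hpx.of_same (BH.bruhat_gen h1).2.odd (BH.sandwich hn h1 h2 (hpx.same hpy))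
  have hxysame : BH.SameSign x y := by
    intro i hi
    have := hpx.same hpy (b⁻¹ i) (hcS.2 i hi)
    simpa using this
  refine ⟨?_, ⟨?_, ?_, ?_⟩, ?_⟩
  · rw [key _ _ hux huy hpx hpy, ex, ey]; exact hxy
  · rintro z ⟨h1, h2⟩
    have hz := (BH.bruhat_gen h1).2
    have hp := hpat z h1 h2
    refine ⟨?_, ?_⟩
    · have := (key _ _ hux hz hpx hp).1 h1
      rwa [ex] at this
    · have := (key _ _ hz huy hp hpy).1 h2
      rwa [ey] at this
  · intro z _ z' _ h
    exact mul_right_cancel h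
  · rintro z ⟨h1, h2⟩
    have hz := (BH.bruhat_gen h1).2
    have hs := BH.sandwich hn h1 h2 hxysame
    have hzb := hz.mul hbG
    have ez : z * b * b⁻¹ = z := by group
    have hp : BH.Pat l (z * b) := by
      refine hpx.of_same hzb.odd ?_
      intro i hi
      exact hs (b i) (hbpos i hi)
    refine ⟨z * b, ⟨?_, ?_⟩, ez⟩
    · rw [key _ _ hux hzb hpx hp, ex, ez]; exact h1
    · rw [key _ _ hzb huy hp hpy, ez, ey]; exact h2
  · rintro z z' ⟨h1, h2⟩ ⟨h3, h4⟩
    exact key z z' (BH.bruhat_gen h1).2 (BH.bruhat_gen h3).2 (hpat z h1 h2) (hpat z' h3 h4)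
end
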